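/- Every countable group G embeds into a finitely generated group H such that: (1) H is simple, complete and co-Hopfian; (2) the image of G is malnormal in H. -/

import Mathlib

/-!
Let `A` be the free product of `G` with countably many copies of `F₂ × D₃`, and let `H` be the
amalgamated product of two copies of `A` along free subgroups of countable rank whose bases
`c 0`, `c 1`, … are identified. The sequence of pairs `c` is generic: it is a limit of finite
approximations, each of which can be extended so as to meet any one of countably many
requirements. The room to extend comes from the letters `xⁱ y x⁻ⁱ` of the first block, of which
cofinitely many remain free over any finite approximation.

* *Finite generation.* Every element of a copy of `A` is a quotient of two elements which, up to a
  conjugation by a letter, are identified with letters of the other copy. Hence the elements `x`,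
  `y` of the two copies generate `H`.
* *Malnormality.* `G` is malnormal in `A`, and no nontrivial element of `G` is conjugate in `A`
  into the amalgamated subgroup.
* *Simplicity.* A reduced word `W` conjugates some basis element `r` to a new letter `d`, which is
  free to be identified with `t * r` for a new letter `t` of the other copy. Then `t` is the
  commutator of `W` and `r`, so it lies in the normal closure of `W`, and any element of a copy of
  `A` is a quotient of elements identified with conjugates of `t`.
* *Rigidity.* An injective endomorphism sends the element `k` of order three, as a torsion
  element, into a conjugate of a factor, and with it `x` and `y`, which normalise `⟨k⟩`. If the
  image `v` of `(x, y, k)` were not conjugate to `(x, y, k)`, then for some identified pair of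
  words `w`, `w'` in `x`, `y`, `k` the value of `w` at `v` would be incompatible with this
  identification. So the endomorphism is a conjugation on each copy of `A`; since only the
  identity centralises the amalgamated pairs, the two conjugations agree. Thus every injective
  endomorphism is inner, which gives both completeness and the co-Hopf property.
-/

namespace GenericAmalgam

universe u

open Function Monoid

section Words

variable {ι K : Type*} {G : ι → Type*} [∀ i, Group (G i)] [Group K]

/-- The value in `K` of a word whose letters come from the groups `G i`. -/
def wordProd (j : ∀ i, G i →* K) (l : List (Σ i, G i)) : K :=
  (l.map fun p => j p.1 p.2).prod

@[simp] lemma wordProd_nil (j : ∀ i, G i →* K) : wordProd j [] = 1 := rfl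

@[simp] lemma wordProd_cons (j : ∀ i, G i →* K) (p : Σ i, G i) (l : List (Σ i, G i)) :
    wordProd j (p :: l) = j p.1 p.2 * wordProd j l := by
  simp [wordProd]

@[simp] lemma wordProd_append (j : ∀ i, G i →* K) (l m : List (Σ i, G i)) :
    wordProd j (l ++ m) = wordProd j l * wordProd j m := by
  simp [wordProd]

lemma wordProd_flatten_replicate (j : ∀ i, G i →* K) (k : ℕ) (l : List (Σ i, G i)) :
    wordProd j (List.replicate k l).flatten = wordProd j l ^ k := by
  induction k with
  | zero => simp
  | succ k ih => rw [List.replicate_succ, List.flatten_cons, wordProd_append, ih, pow_succ']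

/-- The word spelling the inverse of the value of a word. -/
def wordInv (l : List (Σ i, G i)) : List (Σ i, G i) :=
  (l.map fun p => (⟨p.1, p.2⁻¹⟩ : Σ i, G i)).reverse

lemma wordProd_wordInv (j : ∀ i, G i →* K) (l : List (Σ i, G i)) :
    wordProd j (wordInv l) = (wordProd j l)⁻¹ := by
  simp [wordProd, wordInv, List.prod_inv_reverse, comp_def]

end Words

section Amalgam

variable {ι H : Type*} {G : ι → Type*} [∀ i, Group (G i)] [Group H] {φ : ∀ i, H →* G i}

/-- The value of a word in the amalgam of the groups `G i` along the maps `φ i`. -/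
abbrev amalgamProd (φ : ∀ i, H →* G i) (l : List (Σ i, G i)) : PushoutI φ :=
  wordProd (fun i => PushoutI.of i) l

/-- Reduced words of an amalgam, as lists of letters: consecutive letters lie in different
factors, and no letter lies in the amalgamated subgroup. -/
def IsReduced (φ : ∀ i, H →* G i) (l : List (Σ i, G i)) : Prop :=
  l.IsChain (fun p q => p.1 ≠ q.1) ∧ ∀ p ∈ l, p.2 ∉ (φ p.1).range

lemma isReduced_nil : IsReduced φ [] := ⟨List.isChain_nil, by simp⟩

lemma isReduced_cons {p : Σ i, G i} {l : List (Σ i, G i)} :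
    IsReduced φ (p :: l) ↔
      p.2 ∉ (φ p.1).range ∧ (∀ q ∈ l.head?, q.1 ≠ p.1) ∧ IsReduced φ l := by
  simp only [IsReduced, List.isChain_cons, List.mem_cons, forall_eq_or_imp, ne_comm]
  tauto

lemma isReduced_singleton {p : Σ i, G i} : IsReduced φ [p] ↔ p.2 ∉ (φ p.1).range := by
  simp [isReduced_cons, isReduced_nil]

lemma isReduced_append {l m : List (Σ i, G i)} :
    IsReduced φ (l ++ m) ↔ IsReduced φ l ∧ IsReduced φ m ∧
      ∀ p ∈ l.getLast?, ∀ q ∈ m.head?, p.1 ≠ q.1 := by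
  simp only [IsReduced, List.isChain_append, List.mem_append, or_imp, forall_and]
  tauto

lemma isReduced_wordInv {l : List (Σ i, G i)} (hl : IsReduced φ l) :
    IsReduced φ (wordInv l) := by
  constructor
  · rw [wordInv, List.isChain_reverse, List.isChain_map]
    exact hl.1.imp fun _ _ h => h.symm
  · intro p hp
    obtain ⟨q, hq, rfl⟩ := List.mem_map.1 (List.mem_reverse.1 hp)
    simpa using hl.2 q hq

lemma of_mem_range_base {i : ι} {g : G i} (hg : g ∈ (φ i).range) :
    PushoutI.of (φ := φ) i g ∈ (PushoutI.base φ).range := by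
  obtain ⟨c, rfl⟩ := hg
  exact ⟨c, (PushoutI.of_apply_eq_base φ i c).symm⟩

/-! ### Normal forms -/

lemma IsReduced.amalgamProd_notMem_range_base (hφ : ∀ i, Injective (φ i))
    {l : List (Σ i, G i)} (hl : IsReduced φ l) (hne : l ≠ []) :
    amalgamProd φ l ∉ (PushoutI.base φ).range := by
  let w : CoprodI.Word G := ⟨l, fun p hp h1 => hl.2 p hp (h1 ▸ one_mem _), hl.1⟩
  have hw : PushoutI.Reduced φ w := hl.2
  have hprod : PushoutI.ofCoprodI (φ := φ) w.prod = amalgamProd φ l := by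
    simp [CoprodI.Word.prod, wordProd, w, map_list_prod, comp_def]
  intro hmem
  exact hne (congrArg CoprodI.Word.toList (hw.eq_empty_of_mem_range hφ (hprod ▸ hmem)))

lemma exists_base_mul_amalgamProd_eq (hφ : ∀ i, Injective (φ i)) (h : PushoutI φ) :
    ∃ (c : H) (l : List (Σ i, G i)), IsReduced φ l ∧
      PushoutI.base φ c * amalgamProd φ l = h := by
  classical
  obtain ⟨d⟩ := PushoutI.NormalWord.transversal_nonempty φ hφ
  let w : PushoutI.NormalWord d := PushoutI.NormalWord.equiv h
  have hw : w.prod = h := PushoutI.NormalWord.equiv.symm_apply_apply h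
  refine ⟨w.head, w.toList, ⟨w.chain_ne, fun p hp hmem => w.ne_one p hp ?_⟩, ?_⟩
  · have huniq := (d.compl p.1).1 (a₁ := (⟨p.2, hmem⟩, ⟨1, d.one_mem p.1⟩))
      (a₂ := (1, ⟨p.2, w.normalized p.1 p.2 hp⟩)) (by simp)
    exact congrArg (fun x => (x.1 : G p.1)) huniq
  · rw [← hw]
    simp [PushoutI.NormalWord.prod, CoprodI.Word.prod, wordProd, map_list_prod, comp_def]

lemma mem_range_base_or_exists_isReduced (hφ : ∀ i, Injective (φ i)) (h : PushoutI φ) :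
    h ∈ (PushoutI.base φ).range ∨ ∃ l ≠ [], IsReduced φ l ∧ amalgamProd φ l = h := by
  obtain ⟨c, _ | ⟨p, l⟩, hl, rfl⟩ := exists_base_mul_amalgamProd_eq hφ h
  · exact .inl ⟨c, by simp⟩
  · rw [isReduced_cons] at hl
    refine .inr ⟨⟨p.1, φ p.1 c * p.2⟩ :: l, by simp, isReduced_cons.2 ⟨?_, hl.2⟩, ?_⟩
    · rw [Subgroup.mul_mem_cancel_left _ (MonoidHom.mem_range.2 ⟨c, rfl⟩)]
      exact hl.1
    · simp [PushoutI.of_apply_eq_base, mul_assoc]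

lemma exists_of_mul_amalgamProd_eq (hφ : ∀ i, Injective (φ i)) (h : PushoutI φ) (i : ι) :
    ∃ (z : G i) (l : List (Σ i, G i)), IsReduced φ l ∧ (∀ q ∈ l.head?, q.1 ≠ i) ∧
      PushoutI.of i z * amalgamProd φ l = h := by
  obtain ⟨c, l, hl, rfl⟩ := exists_base_mul_amalgamProd_eq hφ h
  by_cases hi : ∀ q ∈ l.head?, q.1 ≠ i
  · exact ⟨φ i c, l, hl, hi, by rw [PushoutI.of_apply_eq_base]⟩
  push Not at hi
  obtain ⟨p, hp, rfl⟩ := hi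
  obtain ⟨l, rfl⟩ := List.head?_eq_some_iff.1 hp
  rw [isReduced_cons] at hl
  exact ⟨φ p.1 c * p.2, l, hl.2.2, hl.2.1, by simp [PushoutI.of_apply_eq_base, mul_assoc]⟩

lemma IsReduced.amalgamProd_notMem_range_of (hφ : ∀ i, Injective (φ i))
    {l : List (Σ i, G i)} (hl : IsReduced φ l) (hne : l ≠ []) {j : ι}
    (hj : ∀ q ∈ l.head?, q.1 ≠ j) :
    amalgamProd φ l ∉ (PushoutI.of (φ := φ) j).range := by
  rintro ⟨g, hg⟩
  by_cases hgr : g ∈ (φ j).range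
  · exact hl.amalgamProd_notMem_range_base hφ hne (hg ▸ of_mem_range_base hgr)
  · have hred : IsReduced φ (⟨j, g⁻¹⟩ :: l) := isReduced_cons.2 ⟨by simpa using hgr, hj, hl⟩
    exact hred.amalgamProd_notMem_range_base hφ (by simp) (by simp [← hg])

lemma IsReduced.amalgamProd_cons_cons_notMem_range_of (hφ : ∀ i, Injective (φ i))
    {p q : Σ i, G i} {l : List (Σ i, G i)} (hl : IsReduced φ (p :: q :: l)) (j : ι) :
    amalgamProd φ (p :: q :: l) ∉ (PushoutI.of (φ := φ) j).range := by
  by_cases hpj : p.1 = j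
  · subst hpj
    obtain ⟨-, hhead, htail⟩ := isReduced_cons.1 hl
    rw [amalgamProd, wordProd_cons,
      Subgroup.mul_mem_cancel_left _ (MonoidHom.mem_range.2 ⟨p.2, rfl⟩)]
    exact htail.amalgamProd_notMem_range_of hφ (by simp) hhead
  · exact hl.amalgamProd_notMem_range_of hφ (by simp) (by simpa using hpj)

/-! ### Conjugacy in amalgams -/

lemma IsReduced.conj_of_notMem_range_of (hφ : ∀ i, Injective (φ i)) {l : List (Σ i, G i)}
    (hl : IsReduced φ l) (hne : l ≠ []) {i : ι} (hi : ∀ q ∈ l.head?, q.1 ≠ i) {a : G i}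
    (ha : a ∉ (φ i).range) (j : ι) :
    (amalgamProd φ l)⁻¹ * PushoutI.of i a * amalgamProd φ l ∉
      (PushoutI.of (φ := φ) j).range := by
  have hlast : ∀ p ∈ (wordInv l).getLast?, p.1 ≠ i := by
    rintro p hp rfl
    simp only [wordInv, List.getLast?_reverse, List.head?_map, Option.mem_def,
      Option.map_eq_some_iff] at hp
    obtain ⟨q, hq, rfl⟩ := hp
    exact hi q hq rfl
  have hred : IsReduced φ (wordInv l ++ ⟨i, a⟩ :: l) :=
    isReduced_append.2 ⟨isReduced_wordInv hl, isReduced_cons.2 ⟨ha, hi, hl⟩, by simpa using hlast⟩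
  have hprod : (amalgamProd φ l)⁻¹ * PushoutI.of i a * amalgamProd φ l =
      amalgamProd φ (wordInv l ++ ⟨i, a⟩ :: l) := by
    simp [wordProd_wordInv, mul_assoc]
  have hlen : 2 ≤ (wordInv l ++ ⟨i, a⟩ :: l).length := by
    have := List.length_pos_iff.2 hne
    simp only [List.length_append, List.length_cons]
    omega
  rw [hprod]
  match wordInv l ++ ⟨i, a⟩ :: l, hred, hlen with
  | _ :: _ :: _, hred, _ => exact hred.amalgamProd_cons_cons_notMem_range_of hφ j

lemma exists_forall_conj_mem_range (hφ : ∀ i, Injective (φ i)) {i j : ι} {h : PushoutI φ}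
    (hh : ¬(i = j ∧ h ∈ (PushoutI.of (φ := φ) i).range)) :
    ∃ z : G i, ∀ a, h⁻¹ * PushoutI.of i a * h ∈ (PushoutI.of (φ := φ) j).range →
      z⁻¹ * a * z ∈ (φ i).range := by
  obtain ⟨z, l, hl, hi, rfl⟩ := exists_of_mul_amalgamProd_eq hφ h i
  refine ⟨z, fun a => ?_⟩
  have hconj : (PushoutI.of i z * amalgamProd φ l)⁻¹ * PushoutI.of i a *
      (PushoutI.of i z * amalgamProd φ l) =
        (amalgamProd φ l)⁻¹ * PushoutI.of i (z⁻¹ * a * z) * amalgamProd φ l := by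
    simp [mul_assoc]
  rw [hconj]
  contrapose
  intro ha
  obtain rfl | hne := eq_or_ne l []
  · have hij : i ≠ j := fun hij => hh ⟨hij, by simp⟩
    have hred : IsReduced φ [⟨i, z⁻¹ * a * z⟩] := isReduced_singleton.2 ha
    simpa using hred.amalgamProd_notMem_range_of hφ (by simp) (j := j) (by simpa using hij)
  · exact hl.conj_of_notMem_range_of hφ hne hi ha j

lemma exists_notMem_range_forall_conj_mem_range [Nonempty ι] (hφ : ∀ i, Injective (φ i))
    {h : PushoutI φ} (hh : ∀ i, h ∉ (PushoutI.of (φ := φ) i).range) :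
    ∃ i, ∃ z ∉ (φ i).range, ∀ (j : ι) (a : G i),
      h⁻¹ * PushoutI.of i a * h ∈ (PushoutI.of (φ := φ) j).range → z⁻¹ * a * z ∈ (φ i).range := by
  rcases mem_range_base_or_exists_isReduced hφ h with hb | ⟨_ | ⟨⟨i, z⟩, l⟩, hne, hl, rfl⟩
  · obtain ⟨w, rfl⟩ := hb
    exact absurd ⟨_, PushoutI.of_apply_eq_base φ (Classical.arbitrary ι) w⟩ (hh _)
  · exact absurd rfl hne
  obtain ⟨hz, hi, hl⟩ := isReduced_cons.1 hl
  refine ⟨i, z, hz, fun j a => ?_⟩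
  have hconj : (amalgamProd φ (⟨i, z⟩ :: l))⁻¹ * PushoutI.of i a * amalgamProd φ (⟨i, z⟩ :: l) =
      (amalgamProd φ l)⁻¹ * PushoutI.of i (z⁻¹ * a * z) * amalgamProd φ l := by
    simp [mul_assoc]
  have hl_ne : l ≠ [] := by
    rintro rfl
    exact hh i ⟨z, by simp⟩
  rw [hconj]
  contrapose
  exact fun ha => hl.conj_of_notMem_range_of hφ hl_ne hi ha j

lemma conj_of_mem_range_of (hφ : ∀ i, Injective (φ i)) {i j : ι} {a : G i}
    (ha : ∀ z : G i, z⁻¹ * a * z ∉ (φ i).range) {h : PushoutI φ}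
    (hh : h⁻¹ * PushoutI.of i a * h ∈ (PushoutI.of (φ := φ) j).range) :
    i = j ∧ h ∈ (PushoutI.of (φ := φ) i).range := by
  by_contra hn
  obtain ⟨z, hz⟩ := exists_forall_conj_mem_range hφ hn
  exact ha z (hz a hh)

/-! ### Torsion in amalgams -/

lemma exists_amalgamProd_eq [Nonempty ι] (h : PushoutI φ) :
    ∃ l : List (Σ i, G i), amalgamProd φ l = h := by
  induction h using PushoutI.induction_on with
  | of i g => exact ⟨[⟨i, g⟩], by simp⟩
  | base c =>
    exact ⟨[⟨Classical.arbitrary ι, φ _ c⟩], by simp [PushoutI.of_apply_eq_base]⟩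
  | mul x y hx hy =>
    obtain ⟨l, rfl⟩ := hx
    obtain ⟨m, rfl⟩ := hy
    exact ⟨l ++ m, by simp⟩

lemma isConj_wordProd_rotate {K : Type*} [Group K] (j : ∀ i, G i →* K)
    (l m : List (Σ i, G i)) : IsConj (wordProd j (l ++ m)) (wordProd j (m ++ l)) :=
  isConj_iff.2 ⟨wordProd j m, by simp [mul_assoc]⟩

/-- A word all of whose cyclic rotations are reduced; its powers are then reduced as well. -/
def IsCyclicallyReduced (φ : ∀ i, H →* G i) (l : List (Σ i, G i)) : Prop :=
  IsReduced φ l ∧ ∀ p ∈ l.getLast?, ∀ q ∈ l.head?, p.1 ≠ q.1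

lemma IsCyclicallyReduced.amalgamProd_pow_ne_one (hφ : ∀ i, Injective (φ i))
    {l : List (Σ i, G i)} (hl : IsCyclicallyReduced φ l) (hne : l ≠ []) {k : ℕ} (hk : k ≠ 0) :
    amalgamProd φ l ^ k ≠ 1 := by
  have hred : IsReduced φ (List.replicate k l).flatten := by
    constructor
    · rw [List.isChain_flatten (by simp [List.mem_replicate, hne.symm])]
      exact ⟨fun m hm => List.eq_of_mem_replicate hm ▸ hl.1.1,
        List.isChain_replicate_of_rel k hl.2⟩
    · intro p hp
      obtain ⟨m, hm, hpm⟩ := List.mem_flatten.1 hp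
      exact hl.1.2 p (List.eq_of_mem_replicate hm ▸ hpm)
  have hne' : (List.replicate k l).flatten ≠ [] := by
    simpa [hk] using hne
  intro hone
  apply hred.amalgamProd_notMem_range_base hφ hne'
  rw [amalgamProd, wordProd_flatten_replicate, hone]
  exact one_mem _

lemma exists_shorter_word_of_mem_range_or_eq {p q : Σ i, G i} (l : List (Σ i, G i))
    (h : p.2 ∈ (φ p.1).range ∨ p.1 = q.1) :
    ∃ r : Σ i, G i, amalgamProd φ (r :: l) = amalgamProd φ (p :: q :: l) := by
  obtain ⟨i, a⟩ := p
  obtain ⟨j, b⟩ := q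
  rcases h with ⟨c, hc⟩ | h
  · obtain rfl : φ i c = a := hc
    exact ⟨⟨j, φ j c * b⟩, by simp [PushoutI.of_apply_eq_base, mul_assoc]⟩
  · obtain rfl : i = j := h
    exact ⟨⟨i, a * b⟩, by simp [mul_assoc]⟩

lemma isCyclicallyReduced_of_minimal_length {l : List (Σ i, G i)} (hlen : 2 ≤ l.length)
    (hmin : ∀ m, IsConj (amalgamProd φ l) (amalgamProd φ m) → l.length ≤ m.length) :
    IsCyclicallyReduced φ l := by
  have key : ∀ (p q : Σ i, G i) (m : List (Σ i, G i)), (p :: q :: m).length = l.length →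
      IsConj (amalgamProd φ l) (amalgamProd φ (p :: q :: m)) →
      p.2 ∉ (φ p.1).range ∧ p.1 ≠ q.1 := by
    intro p q m hm hconj
    by_contra! h
    obtain ⟨r, hr⟩ := exists_shorter_word_of_mem_range_or_eq m (or_iff_not_imp_left.2 h)
    have := hmin (r :: m) (hr ▸ hconj)
    simp only [List.length_cons] at this hm
    omega
  refine ⟨⟨List.isChain_iff_forall_rel_of_append_cons_cons.2 ?_, ?_⟩, ?_⟩
  · rintro p q l₁ l₂ rfl
    exact (key p q (l₂ ++ l₁) (by simp only [List.length_cons, List.length_append]; omega)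
      (isConj_wordProd_rotate _ l₁ (p :: q :: l₂))).2
  · intro p hp
    obtain ⟨l₁, l₂, rfl⟩ := List.append_of_mem hp
    obtain ⟨q, m, hqm⟩ : ∃ q m, l₂ ++ l₁ = q :: m :=
      List.exists_cons_of_ne_nil (by
        rw [← List.length_pos_iff]
        simp only [List.length_append, List.length_cons] at hlen ⊢
        omega)
    have hconj := isConj_wordProd_rotate (fun i => PushoutI.of (φ := φ) i) l₁ (p :: l₂)
    rw [List.cons_append, hqm] at hconj
    refine (key p q m ?_ hconj).1
    rw [List.length_cons, ← hqm]
    simp only [List.length_append, List.length_cons]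
    omega
  · intro p hp q hq
    obtain ⟨l₁, rfl⟩ := List.getLast?_eq_some_iff.1 hp
    obtain ⟨_ , _⟩ | ⟨q', l₁⟩ := l₁
    · simp at hlen
    obtain rfl : q' = q := by simpa using hq
    exact (key p q' l₁ (by simp) (isConj_wordProd_rotate _ (q' :: l₁) [p])).2

lemma exists_isConj_of_of_pow_eq_one [Nonempty ι] (hφ : ∀ i, Injective (φ i)) {k : ℕ}
    (hk : k ≠ 0) {h : PushoutI φ} (hh : h ^ k = 1) :
    ∃ (i : ι) (a : G i), IsConj (PushoutI.of i a) h := by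
  obtain ⟨l₀, hl₀⟩ := exists_amalgamProd_eq h
  obtain ⟨l, hl, hmin⟩ := exists_minimalFor_of_wellFoundedLT
    (fun l => IsConj h (amalgamProd φ l)) List.length
    ⟨l₀, hl₀ ▸ IsConj.refl _⟩
  match l, hl, hmin with
  | [], hl, _ => exact ⟨Classical.arbitrary ι, 1, by simpa using hl.symm⟩
  | [p], hl, _ => exact ⟨p.1, p.2, by simpa using hl.symm⟩
  | p :: q :: l, hl, hmin =>
    have hcyc : IsCyclicallyReduced φ (p :: q :: l) :=
      isCyclicallyReduced_of_minimal_length (by simp) fun m hm =>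
        (le_total _ _).elim (fun h => h) fun h => hmin (hl.trans hm) h
    obtain ⟨x, hx⟩ := isConj_iff.1 hl
    refine absurd ?_ (hcyc.amalgamProd_pow_ne_one hφ (by simp) hk)
    rw [← hx, conj_pow, hh, mul_one, mul_inv_cancel]

end Amalgam

/-! ### Words in one variable over a free group -/

section Substitution

open FreeGroup hiding map_mul map_one map_inv

variable {κ ι : Type*}

/-- The substitution homomorphism: a word in one variable `none` with constants `some k` is
evaluated at `g`, in the free group on the constants and on further tail letters `Sum.inr i`. -/
def substVar (g : FreeGroup (κ ⊕ ι)) : FreeGroup (Option κ) →* FreeGroup (κ ⊕ ι) :=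
  FreeGroup.lift fun o => o.elim g fun k => of (Sum.inl k)

/-- The inclusion of the constants into the words in one variable. -/
abbrev constWord : FreeGroup κ →* FreeGroup (Option κ) := FreeGroup.map some

/-- Evaluation of a word in one variable at the identity. -/
def evalOne : FreeGroup (Option κ) →* FreeGroup κ :=
  FreeGroup.lift fun o => o.elim 1 of

/-- The homomorphism fixing the constants and sending the tail letter `i` to `t i`. -/
def substTail (t : ι → FreeGroup (Option κ)) : FreeGroup (κ ⊕ ι) →* FreeGroup (Option κ) :=
  FreeGroup.lift (Sum.elim (fun k => of (some k)) t)

@[simp] lemma substVar_of_none (g : FreeGroup (κ ⊕ ι)) : substVar g (of none) = g := by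
  simp [substVar]

@[simp] lemma substVar_of_some (g : FreeGroup (κ ⊕ ι)) (k : κ) :
    substVar g (of (some k)) = of (Sum.inl k) := by
  simp [substVar]

@[simp] lemma substVar_constWord (g : FreeGroup (κ ⊕ ι)) (c : FreeGroup κ) :
    substVar g (constWord c) = FreeGroup.map Sum.inl c :=
  DFunLike.congr_fun
    (show (substVar g).comp constWord = FreeGroup.map Sum.inl by ext; simp) c

@[simp] lemma evalOne_of_none : evalOne (of none : FreeGroup (Option κ)) = 1 := by
  simp [evalOne]

@[simp] lemma evalOne_constWord (c : FreeGroup κ) : evalOne (constWord c) = c :=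
  DFunLike.congr_fun
    (show evalOne.comp constWord = MonoidHom.id (FreeGroup κ) by ext; simp [evalOne]) c

lemma constWord_injective : Injective (constWord : FreeGroup κ →* FreeGroup (Option κ)) :=
  LeftInverse.injective evalOne_constWord

@[simp] lemma substTail_of_inr (t : ι → FreeGroup (Option κ)) (i : ι) :
    substTail t (of (Sum.inr i)) = t i := by
  simp [substTail]

lemma substTail_substVar_of_eq_none {t : ι → FreeGroup (Option κ)} {g : FreeGroup (κ ⊕ ι)}
    (hg : substTail t g = of none) (v : FreeGroup (Option κ)) :
    substTail t (substVar g v) = v := by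
  have : (substTail t).comp (substVar g) = MonoidHom.id _ := by
    ext (_ | k)
    · simpa using hg
    · simp [substTail]
  exact DFunLike.congr_fun this v

lemma substTail_substVar_of_eq_one {t : ι → FreeGroup (Option κ)} {g : FreeGroup (κ ⊕ ι)}
    (hg : substTail t g = 1) (v : FreeGroup (Option κ)) :
    substTail t (substVar g v) = constWord (evalOne v) := by
  have : (substTail t).comp (substVar g) = constWord.comp evalOne := by
    ext (_ | k)
    · simpa using hg
    · simp [substTail, evalOne]
  exact DFunLike.congr_fun this v

/-- The letterwise form of substituting the product of the tail letters `i` and `j`. -/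
def substMulLetter (i j : ι) : Option κ × Bool → List ((κ ⊕ ι) × Bool)
  | (some k, b) => [(Sum.inl k, b)]
  | (none, true) => [(Sum.inr i, true), (Sum.inr j, true)]
  | (none, false) => [(Sum.inr j, false), (Sum.inr i, false)]

lemma substVar_mul_mk (i j : ι) (L : List (Option κ × Bool)) :
    substVar (of (Sum.inr i) * of (Sum.inr j)) (mk L) = mk (L.flatMap (substMulLetter i j)) := by
  induction L with
  | nil => simp [← one_eq_mk]
  | cons p L ih =>
    have hcons : mk (p :: L) = mk [p] * mk L := by simp
    rw [hcons, map_mul, ih, List.flatMap_cons, ← mul_mk]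
    congr 1
    rcases p with ⟨_ | k, _ | _⟩ <;> simp [substVar, substMulLetter, of, invRev]

lemma isReduced_flatMap_substMulLetter {i j : ι} (hij : i ≠ j) {L : List (Option κ × Bool)}
    (hL : FreeGroup.IsReduced L) : FreeGroup.IsReduced (L.flatMap (substMulLetter i j)) := by
  induction L with
  | nil => simp
  | cons p L ih =>
    rw [FreeGroup.IsReduced, List.flatMap_cons, List.isChain_append]
    refine ⟨?_, ih hL.tail, ?_⟩
    · rcases p with ⟨_ | k, _ | _⟩ <;> simp [substMulLetter]
    · rcases L with _ | ⟨q, L⟩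
      · simp
      · have h := (List.isChain_cons_cons.1 hL).1
        rcases p with ⟨_ | k, _ | _⟩ <;> rcases q with ⟨_ | l, _ | _⟩ <;>
          simp_all [substMulLetter, hij.symm]

lemma eq_const_or_eq_const_append_none_cons {i j : ι} {L : List (Option κ × Bool)}
    (h : (L.flatMap (substMulLetter i j)).Pairwise
      fun p q => ¬ (p.1 = Sum.inr j ∧ q.1 = Sum.inr i)) :
    (∃ K : List (κ × Bool), L = K.map fun p => (some p.1, p.2)) ∨
    ∃ K K' : List (κ × Bool), L = K.map (fun p => (some p.1, p.2)) ++
      (none, true) :: K'.map fun p => (some p.1, p.2) := by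
  induction L with
  | nil => exact Or.inl ⟨[], rfl⟩
  | cons p L ih =>
    rw [List.flatMap_cons, List.pairwise_append] at h
    obtain ⟨hp, hL, hpL⟩ := h
    rcases p with ⟨_ | k, _ | _⟩
    · simp [substMulLetter] at hp
    · rcases ih hL with ⟨K, rfl⟩ | ⟨K, K', rfl⟩
      · exact Or.inr ⟨[], K, rfl⟩
      · exact absurd ⟨rfl, rfl⟩ (hpL (Sum.inr j, true) (by simp [substMulLetter])
          (Sum.inr i, true) (by simp [substMulLetter]))
    all_goals
      rcases ih hL with ⟨K, rfl⟩ | ⟨K, K', rfl⟩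
      · exact Or.inl ⟨(k, _) :: K, rfl⟩
      · exact Or.inr ⟨(k, _) :: K, K', rfl⟩

lemma eq_of_inr_mem_toWord_substVar [DecidableEq κ] [DecidableEq ι] {i j : ι} {b : Bool}
    {V : FreeGroup (Option κ)}
    (h : (Sum.inr j, b) ∈ (substVar (of (Sum.inr i)) V).toWord) : j = i := by
  have hmap : substVar (of (Sum.inr i) : FreeGroup (κ ⊕ ι)) =
      FreeGroup.map fun o : Option κ => o.elim (Sum.inr i) Sum.inl := by
    ext (_ | k) <;> simp
  rw [hmap, ← mk_toWord (x := V), map.mk, toWord_mk] at h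
  obtain ⟨⟨_ | k, _⟩, -, hp⟩ := List.mem_map.1 (reduce.red.sublist.subset h)
  · simpa using (congrArg Prod.fst hp).symm
  · simp at hp

-- In the product on the right all letters `i` precede all letters `j`, whereas every occurrence
-- of the variable in `V` inserts `i j` or its inverse on the left without any cancellation.
lemma eq_one_or_eq_conj_of_substVar_mul {i j : ι} (hij : i ≠ j) {V : FreeGroup (Option κ)}
    (h : substVar (of (Sum.inr i) * of (Sum.inr j)) V =
      substVar (of (Sum.inr i)) V * substVar (of (Sum.inr j)) V) :
    V = 1 ∨ ∃ c : FreeGroup κ, V = constWord c * of none * (constWord c)⁻¹ := by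
  classical
  have hword : (substVar (of (Sum.inr i) * of (Sum.inr j)) V).toWord =
      V.toWord.flatMap (substMulLetter i j) := by
    conv_lhs => rw [← mk_toWord (x := V), substVar_mul_mk, toWord_mk]
    exact (isReduced_flatMap_substMulLetter hij isReduced_toWord).reduce_eq
  have hsub := toWord_mul_sublist (substVar (of (Sum.inr i)) V) (substVar (of (Sum.inr j)) V)
  rw [← h, hword] at hsub
  have hsorted : ((substVar (of (Sum.inr i)) V).toWord ++
      (substVar (of (Sum.inr j)) V).toWord).Pairwise
        fun p q => ¬ (p.1 = Sum.inr j ∧ q.1 = Sum.inr i) := by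
    refine List.pairwise_append.2 ⟨List.pairwise_of_forall_mem_list ?_,
      List.pairwise_of_forall_mem_list ?_, ?_⟩
    all_goals
      rintro ⟨p, b⟩ hp ⟨q, b'⟩ hq ⟨rfl, rfl⟩
    · exact hij (eq_of_inr_mem_toWord_substVar hp).symm
    · exact hij (eq_of_inr_mem_toWord_substVar hq)
    · exact hij (eq_of_inr_mem_toWord_substVar hp).symm
  have hmk (K : List (κ × Bool)) : mk (K.map fun p => (some p.1, p.2)) = constWord (mk K) := by
    simp [map.mk]
  have heval : evalOne V = 1 := by
    have := congrArg (substTail fun _ => 1) h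
    rw [map_mul] at this
    iterate 3 rw [substTail_substVar_of_eq_one (by simp)] at this
    exact constWord_injective (by simpa using this)
  rcases eq_const_or_eq_const_append_none_cons (hsorted.sublist hsub) with ⟨K, hK⟩ | ⟨K, K', hK⟩
  · left
    have hV : V = constWord (mk K) := by rw [← mk_toWord (x := V), hK, hmk]
    rw [hV, evalOne_constWord] at heval
    rw [hV, heval, map_one]
  · right
    have hV : V = constWord (mk K) * of none * constWord (mk K') := by
      rw [← hmk, ← hmk, of, mul_mk, mul_mk, ← mk_toWord (x := V), hK]
      simp
    rw [hV, map_mul, map_mul, evalOne_constWord, evalOne_constWord, evalOne_of_none,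
      mul_one] at heval
    exact ⟨mk K, by rw [hV, ← inv_eq_of_mul_eq_one_right heval, map_inv]⟩

end Substitution

/-! ### Centralizers in free groups -/

section Centralizer

open FreeGroup hiding map_mul map_one map_inv

variable {α : Type*}

lemma exists_zpow_eq_of_commute_of {a : α} {z : FreeGroup α}
    (h : Commute (of a) z) : ∃ k : ℤ, of a ^ k = z := by
  classical
  induction hn : z.toWord.length using Nat.strong_induction_on generalizing z with
  | _ n ih =>
  rcases hL : z.toWord with _ | ⟨⟨b, s⟩, L⟩
  · exact ⟨0, by simpa [eq_comm, toWord_eq_nil_iff] using hL⟩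
  have hz : z = mk [(b, s)] * mk L := by
    rw [← mk_toWord (x := z), hL]; simp
  have hred : FreeGroup.IsReduced ((b, s) :: L) := hL ▸ isReduced_toWord
  by_cases hb : b = a
  · subst hb
    have hs : mk [(b, s)] = of b ^ (if s then (1 : ℤ) else -1) := by
      cases s <;> simp [of, invRev]
    have hcomm : Commute (of b) (mk L) := by
      rw [show mk L = (mk [(b, s)])⁻¹ * z by rw [hz, inv_mul_cancel_left], hs]
      exact ((Commute.refl _).zpow_right _).inv_right.mul_right h
    obtain ⟨k, hk⟩ := ih L.length (by simp [← hn, hL]) hcomm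
      (by rw [toWord_mk, FreeGroup.IsReduced.reduce_eq (L := L) hred.tail])
    exact ⟨_, by rw [hz, ← hk, hs, ← zpow_add]⟩
  · have hword : (of a * z).toWord = (a, true) :: (b, s) :: L := by
      rw [toWord_mul, hL, toWord_of]
      exact FreeGroup.IsReduced.reduce_eq
        (List.isChain_cons_cons.2 ⟨fun h => absurd h.symm hb, hred⟩)
    have hsub := toWord_mul_sublist z (of a)
    rw [← h.eq, hword, hL, toWord_of] at hsub
    have := hsub.eq_of_length (by simp)
    exact absurd (congrArg Prod.fst (List.cons.inj this).1).symm hb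

lemma eq_one_of_commute_of_of_conj {z : FreeGroup Bool} (hz : Commute (of true) z)
    (hz' : Commute (of false * of true * (of false)⁻¹) z) : z = 1 := by
  let χ : FreeGroup Bool →* Multiplicative ℤ :=
    FreeGroup.lift fun b => if b then Multiplicative.ofAdd 1 else 1
  have hχ (n : ℤ) : χ (of true ^ n) = Multiplicative.ofAdd n := by
    simp [χ, ← ofAdd_zsmul]
  obtain ⟨k, hk⟩ := exists_zpow_eq_of_commute_of hz
  obtain ⟨m, hm⟩ := exists_zpow_eq_of_commute_of (a := true)
    (z := (of false)⁻¹ * z * of false) (by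
      have := congrArg (fun t => (of false)⁻¹ * t * of false) hz'.eq
      simpa [mul_assoc, commute_iff_eq] using this)
  have hkm : k = m := by
    have := congrArg χ hm
    rw [map_mul, map_mul, map_inv, mul_comm, mul_inv_cancel_left, ← hk, hχ, hχ] at this
    exact (Multiplicative.ofAdd.injective this).symm
  have hc : Commute (of false) z := by
    rw [← hkm, hk, mul_assoc] at hm
    exact eq_inv_mul_iff_mul_eq.1 hm
  obtain ⟨l, hl⟩ := exists_zpow_eq_of_commute_of hc
  have hk0 : k = 0 := by
    have := congrArg χ hl
    rw [← hk, hχ, map_zpow] at this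
    exact Multiplicative.ofAdd.injective (by simpa [χ] using this.symm)
  rw [← hk, hk0, zpow_zero]

-- Sending `y` to the generator `0` and `x` to the shift maps `x ^ i y x⁻ⁱ` to the generator `i`
-- of `FreeGroup ℤ ⋊ ℤ`.
lemma lift_conj_injective : Injective (FreeGroup.lift fun i : ℕ =>
    (of false ^ i * of true * (of false ^ i)⁻¹ : FreeGroup Bool)) := by
  let shift : Multiplicative ℤ →* MulAut (FreeGroup ℤ) :=
    zpowersHom _ (freeGroupCongr (Equiv.addRight 1))
  let f : FreeGroup Bool →* FreeGroup ℤ ⋊[shift] Multiplicative ℤ :=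
    FreeGroup.lift fun b =>
      if b then SemidirectProduct.inl (of 0) else SemidirectProduct.inr (Multiplicative.ofAdd 1)
  have hshift (i : ℕ) : shift (Multiplicative.ofAdd 1 ^ i) (of 0) = of (i : ℤ) := by
    induction i with
    | zero => simp
    | succ i ih =>
      rw [pow_succ', map_mul, MulAut.mul_apply, ih]
      simp [shift]
  have hf (i : ℕ) : f (of false ^ i * of true * (of false ^ i)⁻¹) =
      SemidirectProduct.inl (of (i : ℤ)) := by
    rw [← hshift, SemidirectProduct.inl_aut]
    simp [f]
  have hcomp : f.comp (FreeGroup.lift fun i : ℕ => of false ^ i * of true * (of false ^ i)⁻¹) =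
      SemidirectProduct.inl.comp (FreeGroup.map (fun i : ℕ => (i : ℤ))) := by
    ext i : 1
    simpa using hf i
  refine Injective.of_comp (f := f) ?_
  rw [← MonoidHom.coe_comp, hcomp]
  exact SemidirectProduct.inl_injective.comp (map_injective Nat.cast_injective)

end Centralizer

section Conj

open FreeGroup hiding map_mul map_one map_inv

variable {κ ι : Type*}

lemma eq_mul_constWord_of_substVar_mul {i j : ι} (hij : i ≠ j)
    {v w u : FreeGroup (Option κ)}
    (h : substVar (of (Sum.inr i) * of (Sum.inr j)) u =
      substVar (of (Sum.inr i)) v * substVar (of (Sum.inr j)) w) :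
    u = v * constWord (evalOne w) ∧ u = constWord (evalOne v) * w := by
  classical
  constructor
  · have := congrArg (substTail (Pi.mulSingle i (of none))) h
    rwa [map_mul, substTail_substVar_of_eq_none (by simp [hij.symm]),
      substTail_substVar_of_eq_none (by simp), substTail_substVar_of_eq_one (by simp [hij.symm])]
      at this
  · have := congrArg (substTail (Pi.mulSingle j (of none))) h
    rwa [map_mul, substTail_substVar_of_eq_none (by simp [hij]),
      substTail_substVar_of_eq_one (by simp [hij]), substTail_substVar_of_eq_none (by simp)]
      at this

lemma const_or_of_substVar_mul_mem_range {i j : ι} (hij : i ≠ j) {v w : FreeGroup (Option κ)}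
    (h : substVar (of (Sum.inr i)) v * substVar (of (Sum.inr j)) w ∈
      (substVar (of (Sum.inr i) * of (Sum.inr j))).range) :
    (v = constWord (evalOne v) ∧ w = constWord (evalOne w)) ∨
    ∃ c, v = constWord (evalOne v * evalOne w * c) * of none *
        (constWord (evalOne w * c))⁻¹ ∧
      w = constWord (evalOne w * c) * of none * (constWord c)⁻¹ := by
  classical
  obtain ⟨u, hu⟩ := h
  obtain ⟨huv, huw⟩ := eq_mul_constWord_of_substVar_mul hij hu
  set a := evalOne v
  set b := evalOne w
  obtain ⟨V, rfl⟩ : ∃ V, constWord (a * b) * V = u :=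
    ⟨(constWord (a * b))⁻¹ * u, mul_inv_cancel_left _ _⟩
  have hv : v = constWord (a * b) * V * (constWord b)⁻¹ := by rw [huv, mul_inv_cancel_right]
  have hw : w = constWord b * V := by simpa [mul_assoc] using huw.symm
  have hV : substVar (of (Sum.inr i) * of (Sum.inr j)) V =
      substVar (of (Sum.inr i)) V * substVar (of (Sum.inr j)) V := by
    rw [hv, hw] at hu
    simpa only [map_mul, map_inv, substVar_constWord, mul_assoc, inv_mul_cancel_left,
      mul_right_inj] using hu
  rcases eq_one_or_eq_conj_of_substVar_mul hij hV with rfl | ⟨c, rfl⟩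
  · exact Or.inl ⟨by simpa [mul_assoc] using hv, by simpa using hw⟩
  · exact Or.inr ⟨c, by simpa [mul_assoc] using hv, by simpa [mul_assoc] using hw⟩

lemma constWord_mul_of_none_mul_ne (a b c : FreeGroup κ) :
    constWord a * of none * (constWord b)⁻¹ ≠ constWord c := by
  let χ : FreeGroup (Option κ) →* Multiplicative ℤ :=
    FreeGroup.lift fun o => o.elim (Multiplicative.ofAdd 1) fun _ => 1
  have hχ (c : FreeGroup κ) : χ (constWord c) = 1 :=
    DFunLike.congr_fun (show χ.comp constWord = 1 by ext; simp [χ]) c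
  intro h
  have := congrArg χ h
  simp only [map_mul, map_inv, hχ] at this
  simp [χ] at this

lemma constWord_mul_of_none_mul_inj {a b a' b' : FreeGroup κ} :
    constWord a * of none * (constWord b)⁻¹ = constWord a' * of none * (constWord b')⁻¹ ↔
      a = a' ∧ b = b' := by
  refine ⟨fun h => ?_, by rintro ⟨rfl, rfl⟩; rfl⟩
  have heval : a * b⁻¹ = a' * b'⁻¹ := by
    simpa only [map_mul, map_inv, evalOne_constWord, evalOne_of_none, mul_one] using
      congrArg evalOne h
  have hd : a'⁻¹ * a = b'⁻¹ * b := by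
    rw [inv_mul_eq_iff_eq_mul, ← mul_assoc, ← heval, inv_mul_cancel_right]
  have hcomm : Commute (of none) (constWord (a'⁻¹ * a)) := by
    have := congrArg (fun t => (constWord a')⁻¹ * t * constWord b) h
    rw [commute_iff_eq]
    nth_rewrite 1 [hd]
    simpa [mul_assoc] using this.symm
  obtain ⟨k, hk⟩ := exists_zpow_eq_of_commute_of hcomm
  have ha : a'⁻¹ * a = 1 := by
    rw [← evalOne_constWord (a'⁻¹ * a), ← hk, map_zpow, evalOne_of_none, one_zpow]
  obtain rfl : a' = a := inv_mul_eq_one.1 ha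
  exact ⟨rfl, inv_injective (mul_left_cancel heval)⟩

lemma eq_one_of_pairwise_mul_eq_one {M : Type*} [Group M] [IsMulTorsionFree M] {s : Set ι}
    (hs : s.Infinite) {f : ι → M} (h : s.Pairwise fun i j => f i * f j = 1) {i : ι}
    (hi : i ∈ s) : f i = 1 := by
  obtain ⟨j, hj, hji⟩ := (hs.sdiff (Set.finite_singleton i)).nonempty
  obtain ⟨k, hk, hkij⟩ := (hs.sdiff (Set.toFinite {i, j})).nonempty
  have hij : f i * f j = 1 := h hi hj (Ne.symm hji)
  have hik : f i * f k = 1 := h hi hk (by grind)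
  have hjk : f j * f k = 1 := h hj hk (by grind)
  rw [mul_left_cancel (hik.trans hij.symm), ← mul_right_cancel (hij.trans hjk.symm),
    ← pow_two] at hjk
  exact (pow_eq_one_iff_left two_ne_zero).1 hjk

lemma const_or_conj_of_pairwise_substVar_mul_mem_range {s : Set ι} (hs : s.Infinite)
    {w : ι → FreeGroup (Option κ)}
    (h : s.Pairwise fun i j => substVar (of (Sum.inr i)) (w i) * substVar (of (Sum.inr j)) (w j) ∈
      (substVar (of (Sum.inr i) * of (Sum.inr j))).range) :
    (∀ i ∈ s, ∃ c, w i = constWord c) ∨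
    ∃ c, ∀ i ∈ s, w i = constWord c * of none * (constWord c)⁻¹ := by
  by_cases hconst : ∀ i ∈ s, ∃ c, w i = constWord c
  · exact Or.inl hconst
  push Not at hconst
  obtain ⟨i₀, hi₀, hne₀⟩ := hconst
  have hne : ∀ i ∈ s, ∀ c, w i ≠ constWord c := by
    intro i hi c hc
    obtain rfl | hii := eq_or_ne i₀ i
    · exact hne₀ c hc
    rcases const_or_of_substVar_mul_mem_range hii (h hi₀ hi hii) with h' | ⟨d, -, h'⟩
    · exact hne₀ _ h'.1
    · exact constWord_mul_of_none_mul_ne _ _ _ (h'.symm.trans hc)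
  have hform : s.Pairwise fun i j => ∃ c,
      w i = constWord (evalOne (w i) * evalOne (w j) * c) * of none *
        (constWord (evalOne (w j) * c))⁻¹ ∧
      w j = constWord (evalOne (w j) * c) * of none * (constWord c)⁻¹ := fun i hi j hj hij =>
    (const_or_of_substVar_mul_mem_range hij (h hi hj hij)).resolve_left
      fun h' => hne i hi _ h'.1
  have hinv : s.Pairwise fun i j => evalOne (w i) * evalOne (w j) = 1 := by
    intro i hi j hj hij
    obtain ⟨c, hc, hc'⟩ := hform hi hj hij
    obtain ⟨d, hd, hd'⟩ := hform hj hi hij.symm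
    have h₁ := constWord_mul_of_none_mul_inj.1 (hc'.symm.trans hd)
    have h₂ := constWord_mul_of_none_mul_inj.1 (hc.symm.trans hd')
    refine mul_eq_right (b := c) |>.1 ?_
    rw [mul_assoc, h₂.2, ← h₁.2]
  have hone := fun i (hi : i ∈ s) => eq_one_of_pairwise_mul_eq_one hs hinv hi
  have hform' : s.Pairwise fun i j => ∃ c, w i = constWord c * of none * (constWord c)⁻¹ ∧
      w j = constWord c * of none * (constWord c)⁻¹ := fun i hi j hj hij => by
    simpa only [hone i hi, hone j hj, one_mul] using hform hi hj hij
  obtain ⟨i, hi, hii⟩ := (hs.sdiff (Set.finite_singleton i₀)).nonempty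
  obtain ⟨c, hc, -⟩ := hform' hi₀ hi (Ne.symm hii)
  refine Or.inr ⟨c, fun j hj => ?_⟩
  obtain rfl | hij := eq_or_ne i₀ j
  · exact hc
  · obtain ⟨d, hd, hd'⟩ := hform' hi₀ hj hij
    rw [hd', ← hd, hc]

end Conj

/-! ### Marked groups and good lists -/

section WordsIn

variable {J X : Type*} [Group X]

/-- The subgroup of words in the letters of `I`. -/
def wordsIn (I : Set J) : Subgroup (FreeGroup J) := Subgroup.closure (FreeGroup.of '' I)

lemma of_mem_wordsIn {I : Set J} {j : J} (h : j ∈ I) : FreeGroup.of j ∈ wordsIn I :=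
  Subgroup.subset_closure ⟨j, h, rfl⟩

lemma wordsIn_mono {I I' : Set J} (h : I ⊆ I') : wordsIn I ≤ wordsIn I' :=
  Subgroup.closure_mono (Set.image_mono h)

lemma wordsIn_le_comap {f : FreeGroup J →* X} {I : Set J} {K : Subgroup X} :
    wordsIn I ≤ K.comap f ↔ ∀ j ∈ I, f (FreeGroup.of j) ∈ K := by
  simp [wordsIn, Set.subset_def]

lemma map_mem_of_mem_wordsIn (f : FreeGroup J →* X) {I : Set J} {K : Subgroup X}
    (h : ∀ j ∈ I, f (FreeGroup.of j) ∈ K) {w : FreeGroup J} (hw : w ∈ wordsIn I) : f w ∈ K :=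
  wordsIn_le_comap.2 h hw

lemma eqOn_wordsIn {f g : FreeGroup J →* X} {I : Set J}
    (h : ∀ j ∈ I, f (FreeGroup.of j) = g (FreeGroup.of j)) : Set.EqOn f g (wordsIn I) :=
  MonoidHom.eqOn_closure (by rintro _ ⟨j, hj, rfl⟩; exact h j hj)

lemma lift_map_apply {J' : Type*} (f : J' → X) (g : J → J') (w : FreeGroup J) :
    FreeGroup.lift f (FreeGroup.map g w) = FreeGroup.lift (f ∘ g) w :=
  DFunLike.congr_fun (FreeGroup.ext_hom ((FreeGroup.lift f).comp (FreeGroup.map g))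
    (FreeGroup.lift (f ∘ g)) fun j => by simp) w

lemma exists_finite_mem_wordsIn {I : Set J} {w : FreeGroup J} (hw : w ∈ wordsIn I) :
    ∃ T : Set J, T.Finite ∧ w ∈ wordsIn (I ∩ T) := by
  have mono {T T'} (h : T ⊆ T') : wordsIn (I ∩ T) ≤ wordsIn (I ∩ T') :=
    wordsIn_mono (Set.inter_subset_inter_right I h)
  induction hw using Subgroup.closure_induction with
  | mem x hx =>
    obtain ⟨j, hj, rfl⟩ := hx
    exact ⟨{j}, Set.finite_singleton j, of_mem_wordsIn ⟨hj, rfl⟩⟩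
  | one => exact ⟨∅, Set.finite_empty, one_mem _⟩
  | mul x y _ _ hx hy =>
    obtain ⟨T, hT, hxT⟩ := hx
    obtain ⟨T', hT', hyT'⟩ := hy
    exact ⟨T ∪ T', hT.union hT', mul_mem (mono Set.subset_union_left hxT)
      (mono Set.subset_union_right hyT')⟩
  | inv x _ hx =>
    obtain ⟨T, hT, hxT⟩ := hx
    exact ⟨T, hT, inv_mem hxT⟩

end WordsIn

section Marking

variable {A : Type u} [Group A]

/-- `B` and `t` generate their free product with `t` of infinite order, and this free product is a
retract of `A`; encoded by the extension property for homomorphisms. -/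
def ExtendsFreely (B : Subgroup A) (t : A) : Prop :=
  ∀ (X : Type u) [Group X] (f : B →* X) (τ : X),
    ∃ Λ : A →* X, (∀ b : B, Λ b = f b) ∧ Λ t = τ

/-- Conjugation by `x` fixes or inverts `k`. -/
def FixesUpToInv (x k : A) : Prop := x * k * x⁻¹ = k ∨ x * k * x⁻¹ = k⁻¹

/-- The conjugates `xⁱ y x⁻ⁱ`, from which the letters of the generic sequences are built. -/
def tailLetter (x y : A) (i : ℕ) : A := x ^ i * y * (x ^ i)⁻¹

/-- The tail letters, multiplied by `k` at the indices selected by `ε`. -/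
def twistedTail (x y k : A) (ε : ℕ → Bool) (i : ℕ) : A :=
  if ε i then k * tailLetter x y i else tailLetter x y i

variable (A) in
/-- The data and properties of the amalgamated factor used in the generic construction: elements
`x`, `y` whose tail letters are free, an element `k` of order three normalised by `x` and `y`, the
subgroup `core` to be kept malnormal, and an exhaustion by subgroups `stage m`, each of which has a
free complementary letter `letter m`. -/
structure Marking where
  x : A
  y : A
  k : A
  core : Subgroup A
  stage : ℕ → Subgroup A
  letter : ℕ → A
  stage_mono : Monotone stage
  exists_mem_stage : ∀ a, ∃ m, a ∈ stage m
  x_mem : x ∈ stage 0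
  y_mem : y ∈ stage 0
  k_mem : k ∈ stage 0
  core_le : core ≤ stage 0
  extendsFreely : ∀ m, ExtendsFreely (stage m) (letter m)
  k_pow_three : k ^ 3 = 1
  k_ne_one : k ≠ 1
  fixes_x : FixesUpToInv x k
  fixes_y : FixesUpToInv y k
  lift_injective : ∀ ε, Injective (FreeGroup.lift (twistedTail x y k ε))
  eq_one_of_conj_mem_range : ∀ ε z, ∀ g ∈ core,
    z * g * z⁻¹ ∈ (FreeGroup.lift (twistedTail x y k ε)).range → g = 1
  eq_one_of_commute : ∀ i z, Commute z (tailLetter x y i) →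
    Commute z (tailLetter x y (i + 1)) → z = 1
  commute_k : ∀ h, h ^ 3 = 1 → FixesUpToInv x h → FixesUpToInv y h → Commute h k
  malnormal : ∀ h, h ∉ core → ∀ g ∈ core, h * g * h⁻¹ ∈ core → g = 1

namespace Marking

variable (M : Marking A)

/-- The tail letters of a marking. -/
abbrev tail (i : ℕ) : A := tailLetter M.x M.y i

/-- The twisted tail letters of a marking. -/
abbrev twisted (ε : ℕ → Bool) (i : ℕ) : A := twistedTail M.x M.y M.k ε i

lemma twisted_congr {ε ε' : ℕ → Bool} {i : ℕ} (h : ε i = ε' i) :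
    M.twisted ε i = M.twisted ε' i := by
  simp [twistedTail, h]

lemma tail_mem_stage (i m : ℕ) : M.tail i ∈ M.stage m :=
  M.stage_mono m.zero_le <| mul_mem (mul_mem (pow_mem M.x_mem _) M.y_mem)
    (inv_mem (pow_mem M.x_mem _))

lemma twisted_mem_stage (ε : ℕ → Bool) (i m : ℕ) : M.twisted ε i ∈ M.stage m := by
  unfold twisted twistedTail
  split_ifs
  · exact mul_mem (M.stage_mono m.zero_le M.k_mem) (M.tail_mem_stage i m)
  · exact M.tail_mem_stage i m

lemma exists_forall_mem_stage (L : List A) : ∃ m, ∀ z ∈ L, z ∈ M.stage m := by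
  choose m hm using M.exists_mem_stage
  obtain ⟨n, hn⟩ := ((List.finite_toSet L).image m).bddAbove
  exact ⟨n, fun z hz => M.stage_mono (hn ⟨z, hz, rfl⟩) (hm z)⟩

/-- The letters of words over a list `L` of constants (padded by `1`) and the twisted tails. -/
def gen (L : List A) (ε : ℕ → Bool) : ℕ ⊕ ℕ → A :=
  Sum.elim (fun k => L.getD k 1) (M.twisted ε)

@[simp] lemma gen_inl (L : List A) (ε : ℕ → Bool) (k : ℕ) : M.gen L ε (.inl k) = L.getD k 1 := rfl

@[simp] lemma gen_inr (L : List A) (ε : ℕ → Bool) (i : ℕ) :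
    M.gen L ε (.inr i) = M.twisted ε i := rfl

/-- The indices of the first `n` constants and of the tail letters from `N` on. -/
def indexSet (n N : ℕ) : Set (ℕ ⊕ ℕ) := Sum.elim (· < n) (N ≤ ·)

@[simp] lemma inl_mem_indexSet {n N k : ℕ} : .inl k ∈ indexSet n N ↔ k < n := Iff.rfl

@[simp] lemma inr_mem_indexSet {n N i : ℕ} : .inr i ∈ indexSet n N ↔ N ≤ i := Iff.rfl

lemma indexSet_anti (n : ℕ) {N N' : ℕ} (h : N' ≤ N) : indexSet n N ⊆ indexSet n N' := by
  rintro (k | i) hk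
  · exact hk
  · exact h.trans hk

/-- The subgroup generated by `L` and the twisted tail letters from `N` on. -/
def span (L : List A) (N : ℕ) (ε : ℕ → Bool) : Subgroup A :=
  (wordsIn (indexSet L.length N)).map (FreeGroup.lift (M.gen L ε))

variable {M} {L : List A} {N : ℕ} {ε : ℕ → Bool}

lemma gen_mem_span {j : ℕ ⊕ ℕ} (h : j ∈ indexSet L.length N) : M.gen L ε j ∈ M.span L N ε :=
  ⟨_, of_mem_wordsIn h, FreeGroup.lift_apply_of⟩

lemma span_le {K : Subgroup A} : M.span L N ε ≤ K ↔ ∀ j ∈ indexSet L.length N, M.gen L ε j ∈ K := by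
  simp only [span, Subgroup.map_le_iff_le_comap, wordsIn_le_comap, FreeGroup.lift_apply_of]

lemma span_anti {N' : ℕ} (h : N ≤ N') : M.span L N' ε ≤ M.span L N ε :=
  Subgroup.map_mono (wordsIn_mono (indexSet_anti _ h))

variable (M) in
/-- Over `L` and the tails from `N` on, `M` is still generic: for every choice of twists these
elements are free, no nontrivial element of their span is conjugate into the core, and the span
avoids the elements of `X`. -/
structure IsGood (L : List A) (N : ℕ) (X : List A) : Prop where
  free : ∀ ε, ∀ w ∈ wordsIn (indexSet L.length N), FreeGroup.lift (M.gen L ε) w = 1 → w = 1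
  conj : ∀ ε z, ∀ g ∈ M.core, z * g * z⁻¹ ∈ M.span L N ε → g = 1
  avoid : ∀ ε, ∀ x ∈ X, x ∉ M.span L N ε

variable {X : List A}

lemma IsGood.injOn (h : M.IsGood L N X) (ε : ℕ → Bool) :
    Set.InjOn (FreeGroup.lift (M.gen L ε)) (wordsIn (indexSet L.length N)) := by
  intro w hw w' hw' he
  exact mul_inv_eq_one.1 (h.free ε _ (mul_mem hw (inv_mem hw')) (by rw [map_mul, map_inv, he,
    mul_inv_cancel]))

lemma IsGood.mono (h : M.IsGood L N X) {N' : ℕ} (hN : N ≤ N') {X' : List A} (hX : X' ⊆ X) :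
    M.IsGood L N' X' where
  free ε w hw := h.free ε w (wordsIn_mono (indexSet_anti _ hN) hw)
  conj ε z g hg hz := h.conj ε z g hg (span_anti hN hz)
  avoid ε x hx hx' := h.avoid ε x (hX hx) (span_anti hN hx')

variable (M) in
lemma isGood_nil : M.IsGood [] 0 [] := by
  have words : wordsIn (indexSet ([] : List A).length 0) ≤ (FreeGroup.map Sum.inr).range := by
    refine fun w hw => map_mem_of_mem_wordsIn (MonoidHom.id _) ?_ hw
    rintro (k | i) hj
    · simp at hj
    · exact ⟨FreeGroup.of i, by simp⟩
  have lift_map (ε) (w : FreeGroup ℕ) : FreeGroup.lift (M.gen [] ε) (FreeGroup.map Sum.inr w) =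
      FreeGroup.lift (M.twisted ε) w :=
    lift_map_apply _ _ w
  refine ⟨fun ε w hw h => ?_, ?_, by simp⟩
  · obtain ⟨w, rfl⟩ := words hw
    rw [lift_map, (injective_iff_map_eq_one' _).1 (M.lift_injective ε)] at h
    rw [h, map_one]
  · rintro ε z g hg ⟨w, hw, hz⟩
    obtain ⟨w, rfl⟩ := words hw
    exact M.eq_one_of_conj_mem_range ε z g hg ⟨w, by rw [← hz, lift_map]⟩

end Marking

/-- The subgroup generated by the elements of a list. -/
def listClosure (L : List A) : Subgroup A := Subgroup.closure {z | z ∈ L}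

lemma listClosure_mono {L L' : List A} (h : L ⊆ L') : listClosure L ≤ listClosure L' :=
  Subgroup.closure_mono h

lemma mem_listClosure {L : List A} {z : A} (h : z ∈ L) : z ∈ listClosure L :=
  Subgroup.subset_closure h

lemma getD_mem_listClosure (L : List A) (k : ℕ) : L.getD k 1 ∈ listClosure L := by
  rcases lt_or_ge k L.length with hk | hk
  · rw [List.getD_eq_getElem _ _ hk]
    exact mem_listClosure (List.getElem_mem hk)
  · rw [List.getD_eq_default _ _ hk]
    exact one_mem _

namespace Marking

variable {M : Marking A} {L X : List A} {N : ℕ}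

/-- Twist the letters below `M'` by `ε` and the others by `ε'`: the two expressions of `z`
then agree as words, so killing the letters below `M'` changes neither of them. -/
lemma IsGood.mem_listClosure_of_mem_span (h : M.IsGood L N X) {z : A} {M' : ℕ} (hM : N ≤ M')
    {ε ε' : ℕ → Bool} {w : FreeGroup (ℕ ⊕ ℕ)}
    (hw : w ∈ wordsIn (indexSet L.length N ∩ {j | ∀ i, j = .inr i → i < M'}))
    (hwz : FreeGroup.lift (M.gen L ε) w = z) (hz : z ∈ M.span L M' ε') : z ∈ listClosure L := by
  obtain ⟨w', hw', hwz'⟩ := hz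
  let δ : ℕ → Bool := fun i => if i < M' then ε i else ε' i
  have hδw : FreeGroup.lift (M.gen L δ) w = z := by
    rw [← hwz]
    refine eqOn_wordsIn ?_ hw
    rintro (k | i) ⟨-, hj⟩
    · simp
    · simpa using M.twisted_congr (if_pos (hj i rfl))
  have hδw' : FreeGroup.lift (M.gen L δ) w' = z := by
    rw [← hwz']
    refine eqOn_wordsIn ?_ hw'
    rintro (k | i) hj
    · simp
    · simpa using M.twisted_congr (if_neg (inr_mem_indexSet.1 hj).not_gt)
  have hww' : w = w' := h.injOn δ (wordsIn_mono Set.inter_subset_left hw)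
    (wordsIn_mono (indexSet_anti _ hM) hw') (hδw.trans hδw'.symm)
  let kill : FreeGroup (ℕ ⊕ ℕ) →* FreeGroup (ℕ ⊕ ℕ) :=
    FreeGroup.lift (Sum.elim (fun k => .of (.inl k)) fun i => if i < M' then 1 else .of (.inr i))
  have kill_w : kill w = w := by
    rw [hww']
    refine eqOn_wordsIn (g := MonoidHom.id _) ?_ hw'
    rintro (k | i) hj
    · simp [kill]
    · simp [kill, (inr_mem_indexSet.1 hj).not_gt]
  rw [← hδw, ← kill_w]
  refine map_mem_of_mem_wordsIn ((FreeGroup.lift (M.gen L δ)).comp kill) ?_ hw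
  rintro (k | i) ⟨-, hj⟩
  · simpa [kill] using getD_mem_listClosure L k
  · simp [kill, hj i rfl, one_mem]

lemma IsGood.exists_notMem_span (h : M.IsGood L N X) {z : A} (hz : z ∉ listClosure L) :
    ∃ M', N ≤ M' ∧ ∀ ε, z ∉ M.span L M' ε := by
  by_cases hall : ∀ ε, z ∉ M.span L N ε
  · exact ⟨N, le_rfl, hall⟩
  push Not at hall
  obtain ⟨ε, w, hw, hwz⟩ := hall
  obtain ⟨T, hT, hwT⟩ := exists_finite_mem_wordsIn hw
  obtain ⟨b, hb⟩ := (hT.preimage (f := Sum.inr) Sum.inr_injective.injOn).bddAbove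
  refine ⟨max N (b + 1), le_max_left _ _, fun ε' hz' => hz ?_⟩
  refine h.mem_listClosure_of_mem_span (le_max_left _ _) (wordsIn_mono ?_ hwT) hwz hz'
  refine Set.inter_subset_inter_right _ ?_
  rintro j hj i rfl
  exact lt_max_of_lt_right (Nat.lt_succ_of_le (hb hj))

lemma IsGood.exists_avoiding (h : M.IsGood L N X) (zs : List A)
    (hz : ∀ z ∈ zs, z ∉ listClosure L) : ∃ N', N ≤ N' ∧ M.IsGood L N' (zs ++ X) := by
  induction zs with
  | nil => exact ⟨N, le_rfl, h⟩
  | cons z zs ih =>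
    obtain ⟨N₁, h₁, hgood⟩ := ih fun z' hz' => hz z' (List.mem_cons_of_mem _ hz')
    obtain ⟨N₂, h₂, hz₂⟩ := hgood.exists_notMem_span (hz z List.mem_cons_self)
    have hgood := hgood.mono h₂ (List.Subset.refl _)
    exact ⟨N₂, h₁.trans h₂, hgood.free, hgood.conj, fun ε x hx =>
      (List.mem_cons.1 hx).elim (fun he => he ▸ hz₂ ε) (hgood.avoid ε x)⟩

lemma gen_append_left {L' : List A} {ε : ℕ → Bool} {k : ℕ} (hk : k < L.length) :
    M.gen (L ++ L') ε (.inl k) = M.gen L ε (.inl k) :=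
  List.getD_append _ _ _ _ hk

lemma IsGood.of_subst (h : M.IsGood L N X) {L' : List A} {N' : ℕ}
    (s ρ : FreeGroup (ℕ ⊕ ℕ) →* FreeGroup (ℕ ⊕ ℕ))
    (hs : ∀ j ∈ indexSet L'.length N', s (.of j) ∈ wordsIn (indexSet L.length N))
    (hρ : ∀ j ∈ indexSet L'.length N', ρ (s (.of j)) = .of j)
    (hgen : ∀ ε, ∃ ε', ∀ j ∈ indexSet L'.length N',
      M.gen L' ε j = FreeGroup.lift (M.gen L ε') (s (.of j))) : M.IsGood L' N' X := by
  have hsw := wordsIn_le_comap.2 hs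
  have hlift (ε) : ∃ ε', Set.EqOn (FreeGroup.lift (M.gen L' ε))
      ((FreeGroup.lift (M.gen L ε')).comp s) (wordsIn (indexSet L'.length N')) :=
    (hgen ε).imp fun _ hε' => eqOn_wordsIn (by simpa using hε')
  have hspan (ε) : ∃ ε', M.span L' N' ε ≤ M.span L N ε' := by
    obtain ⟨ε', hε'⟩ := hgen ε
    exact ⟨ε', span_le.2 fun j hj => ⟨_, hs j hj, (hε' j hj).symm⟩⟩
  refine ⟨fun ε w hw h1 => ?_, fun ε z g hg hz => ?_, fun ε x hx hx' => ?_⟩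
  · obtain ⟨ε', hε'⟩ := hlift ε
    have hsw1 : s w = 1 := h.free ε' _ (hsw hw) ((hε' hw).symm.trans h1)
    have hρs : ρ (s w) = w :=
      eqOn_wordsIn (f := ρ.comp s) (g := MonoidHom.id _) (by simpa using hρ) hw
    rw [← hρs, hsw1, map_one]
  · obtain ⟨ε', hε'⟩ := hspan ε
    exact h.conj ε' z g hg (hε' hz)
  · obtain ⟨ε', hε'⟩ := hspan ε
    exact h.avoid ε' x hx (hε' hx')

lemma IsGood.append_word (h : M.IsGood L N X) {τ : A} {N' : ℕ} (hN : N ≤ N')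
    {w : FreeGroup (ℕ ⊕ ℕ)} (hw : w ∈ wordsIn (indexSet L.length N))
    (ρ : FreeGroup (ℕ ⊕ ℕ) →* FreeGroup (ℕ ⊕ ℕ))
    (hρ : ∀ j ∈ indexSet L.length N', ρ (.of j) = .of j) (hρw : ρ w = .of (.inl L.length))
    (hτ : ∀ ε : ℕ → Bool, ∃ ε' : ℕ → Bool, (∀ i, N' ≤ i → ε' i = ε i) ∧
      FreeGroup.lift (M.gen L ε') w = τ) :
    M.IsGood (L ++ [τ]) N' X := by
  let s : FreeGroup (ℕ ⊕ ℕ) →* FreeGroup (ℕ ⊕ ℕ) :=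
    FreeGroup.lift (update FreeGroup.of (.inl L.length) w)
  have index_cases {j} (hj : j ∈ indexSet (L ++ [τ]).length N') :
      j = .inl L.length ∨ j ∈ indexSet L.length N' ∧ s (.of j) = .of j := by
    rw [or_iff_not_imp_left]
    intro hne
    refine ⟨?_, by simp [s, hne]⟩
    rcases j with k | i
    · simp at hj hne ⊢; omega
    · exact hj
  have hsτ : s (.of (.inl L.length)) = w := by simp [s]
  refine h.of_subst s ρ (fun j hj => ?_) (fun j hj => ?_) fun ε => ?_
  · rcases index_cases hj with rfl | ⟨hj', hsj⟩
    · rwa [hsτ]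
    · exact hsj.symm ▸ of_mem_wordsIn (indexSet_anti _ hN hj')
  · rcases index_cases hj with rfl | ⟨hj', hsj⟩
    · rw [hsτ, hρw]
    · rw [hsj, hρ j hj']
  · obtain ⟨ε', hε', hwτ⟩ := hτ ε
    refine ⟨ε', fun j hj => ?_⟩
    rcases index_cases hj with rfl | ⟨hj', hsj⟩
    · simp [hsτ, hwτ]
    · rw [hsj, FreeGroup.lift_apply_of]
      rcases j with k | i
      · exact gen_append_left hj'
      · exact M.twisted_congr (hε' i hj').symm

lemma IsGood.append_twisted (h : M.IsGood L N X) {i : ℕ} (hi : N ≤ i) (b : Bool) :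
    M.IsGood (L ++ [M.twisted (fun _ => b) i]) (i + 1) X := by
  refine h.append_word (w := .of (.inr i)) (by omega) (of_mem_wordsIn hi)
    (FreeGroup.lift (update FreeGroup.of (.inr i) (.of (.inl L.length)))) ?_ (by simp) ?_
  · rintro (k | j) hj
    · simp
    · have : j ≠ i := by simp at hj; omega
      simp [this]
  · intro ε
    refine ⟨update ε i b, fun j hj => update_of_ne (by omega) _ _, ?_⟩
    simpa using M.twisted_congr (by simp)

lemma twisted_false (i : ℕ) : M.twisted (fun _ => false) i = M.tail i := by
  simp [twistedTail]

lemma IsGood.append_tail (h : M.IsGood L N X) {i : ℕ} (hi : N ≤ i) :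
    M.IsGood (L ++ [M.tail i]) (i + 1) X :=
  twisted_false (M := M) i ▸ h.append_twisted hi false

lemma IsGood.append_tail_mul_tail (h : M.IsGood L N X) {i j : ℕ} (hi : N ≤ i) (hj : N ≤ j)
    (hij : i ≠ j) : M.IsGood (L ++ [M.tail i * M.tail j]) (max i j + 1) X := by
  refine h.append_word (w := .of (.inr i) * .of (.inr j)) (by omega)
    (mul_mem (of_mem_wordsIn (inr_mem_indexSet.2 hi)) (of_mem_wordsIn (inr_mem_indexSet.2 hj)))
    (FreeGroup.lift (update (update FreeGroup.of (.inr j) 1) (.inr i) (.of (.inl L.length))))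
    ?_ (by simp [hij.symm]) ?_
  · rintro (k | l) hl
    · simp
    · have : l ≠ i ∧ l ≠ j := by simp at hl; omega
      simp [this]
  · intro ε
    refine ⟨fun l => if l = i ∨ l = j then false else ε l, fun l hl => ?_, ?_⟩
    · exact if_neg (by omega)
    · simp [twistedTail]

end Marking

end Marking

/-! ### Adjoining letters with prescribed cosets -/

section InducedAction

variable {B F : Type*} [Group B] [Group F] {E : Subgroup B}

lemma exists_mul_equivariant (ψ : E →* F) :
    ∃ c : B → F, c 1 = 1 ∧ ∀ (b : B) (e : E), c (b * e) = c b * ψ e := by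
  let s : B ⧸ E → B := Quotient.out
  have hs (b : B) : (s b)⁻¹ * b ∈ E := QuotientGroup.eq.1 (Quotient.out_eq' _)
  let c : B → F := fun b => ψ ⟨_, hs b⟩
  have hc (b : B) (e : E) : c (b * e) = c b * ψ e := by
    simp only [c, ← map_mul]
    congr 1
    ext
    simp [mul_assoc, QuotientGroup.mk_mul_of_mem b e.2]
  exact ⟨fun b => (c 1)⁻¹ * c b, by simp, fun b e => by simp only [hc, mul_assoc]⟩

/-- The action of `B` on `B ×_E F`, with `B ×_E F` trivialised as `(B ⧸ E) × F` by means of `c`. -/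
lemma exists_induced_action {ψ : E →* F} {c : B → F}
    (hc : ∀ (b : B) (e : E), c (b * e) = c b * ψ e) :
    ∃ f : B →* Equiv.Perm ((B ⧸ E) × F), ∀ (a b : B) (w : F),
      f a (QuotientGroup.mk b, c b * w) = (QuotientGroup.mk (a * b), c (a * b) * w) := by
  let s : B ⧸ E → B := Quotient.out
  have hs (y : B ⧸ E) : QuotientGroup.mk (s y) = y := Quotient.out_eq' y
  have hcoord (p : (B ⧸ E) × F) :
      p = (QuotientGroup.mk (s p.1), c (s p.1) * ((c (s p.1))⁻¹ * p.2)) := by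
    simp [hs]
  let act (a : B) (p : (B ⧸ E) × F) : (B ⧸ E) × F :=
    (a • p.1, c (a * s p.1) * ((c (s p.1))⁻¹ * p.2))
  have act_mk (a b : B) (w : F) :
      act a (QuotientGroup.mk b, c b * w) = (QuotientGroup.mk (a * b), c (a * b) * w) := by
    obtain ⟨e, he⟩ : ∃ e : E, s (QuotientGroup.mk b) = b * e :=
      ⟨⟨_, QuotientGroup.eq.1 (hs (QuotientGroup.mk b)).symm⟩, by simp⟩
    refine Prod.ext rfl ?_
    simp only [act, he, ← mul_assoc, hc]
    group
  let _ : MulAction B ((B ⧸ E) × F) :=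
    { smul := act
      one_smul := fun p => by
        rw [hcoord p]
        exact (act_mk 1 _ _).trans (by rw [one_mul])
      mul_smul := fun a a' p => by
        rw [hcoord p]
        change act _ _ = act _ (act _ _)
        simp only [act_mk, mul_assoc] }
  exact ⟨MulAction.toPermHom B _, act_mk⟩

variable {κ : Type*} [Finite κ] {u v : κ → B}

lemma exists_perm_cosets (hv : Pairwise fun k l => (v k)⁻¹ * v l ∉ E)
    (hu : Pairwise fun k l => u k * (u l)⁻¹ ∉ E) :
    ∃ π : Equiv.Perm (B ⧸ E), ∀ k, π (QuotientGroup.mk (v k)) = QuotientGroup.mk (u k)⁻¹ := by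
  refine Equiv.Perm.exists_extending_pair (fun k => QuotientGroup.mk (v k))
    (fun k => QuotientGroup.mk (u k)⁻¹) ?_ ?_
  · intro k l hkl
    by_contra hne
    exact hv hne (QuotientGroup.eq.1 hkl)
  · intro k l hkl
    by_contra hne
    exact hu hne (by simpa using QuotientGroup.eq.1 hkl)

end InducedAction

section ExtendsFreely

variable {A : Type u} [Group A] {B : Subgroup A} {t : A} {E : Subgroup B} {κ : Type*} {u v : κ → B}

/-- The subgroup generated by `E ≤ B` and the elements `u k * t * v k`. -/
def adjoinLetters (t : A) (E : Subgroup B) (u v : κ → B) : Subgroup A :=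
  E.map B.subtype ⊔ Subgroup.closure (Set.range fun k => u k * t * v k)

lemma adjoinLetters_le {K : Subgroup A} (hE : ∀ e ∈ E, (e : A) ∈ K)
    (hK : ∀ k, u k * t * v k ∈ K) : adjoinLetters t E u v ≤ K :=
  sup_le (Subgroup.map_le_iff_le_comap.2 hE)
    ((Subgroup.closure_le _).2 (Set.range_subset_iff.2 hK))

variable [Finite κ]

lemma ExtendsFreely.exists_perm_cosets_hom (ht : ExtendsFreely B t)
    (hv : Pairwise fun k l => (v k)⁻¹ * v l ∉ E) (hu : Pairwise fun k l => u k * (u l)⁻¹ ∉ E) :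
    ∃ Λ : A →* Equiv.Perm (B ⧸ E), (∀ (b : B) (y : B ⧸ E), Λ b y = b • y) ∧
      ∀ k, Λ (u k * t * v k) (QuotientGroup.mk 1) = QuotientGroup.mk 1 := by
  obtain ⟨π, hπ⟩ := exists_perm_cosets hv hu
  obtain ⟨Λ, hΛ, hΛt⟩ := ht _ (MulAction.toPermHom B (B ⧸ E)) π
  have hB (b : B) (y : B ⧸ E) : Λ b y = b • y := by rw [hΛ]; rfl
  refine ⟨Λ, hB, fun k => ?_⟩
  have hsmul (b b' : B) : Λ b (QuotientGroup.mk b') = QuotientGroup.mk (b * b') := hB b _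
  rw [map_mul, map_mul, hΛt, Equiv.Perm.mul_apply, Equiv.Perm.mul_apply, hsmul, mul_one, hπ,
    hsmul, mul_inv_cancel]

/-- `B` acts on `(B ⧸ E) × F` by the action induced from `ψ`, and `t` by a permutation carrying the
fibre of `v k` to that of `(u k)⁻¹` with the twist needed to realise `d k`. -/
lemma ExtendsFreely.exists_perm_prod_hom (ht : ExtendsFreely B t)
    (hv : Pairwise fun k l => (v k)⁻¹ * v l ∉ E) (hu : Pairwise fun k l => u k * (u l)⁻¹ ∉ E)
    {F : Type} [Group F] (ψ : E →* F) (d : κ → F) :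
    ∃ Λ : A →* Equiv.Perm ((B ⧸ E) × F),
      (∀ (e : E) (w : F), Λ (e : B) (QuotientGroup.mk 1, w) = (QuotientGroup.mk 1, ψ e * w)) ∧
      ∀ k w, Λ (u k * t * v k) (QuotientGroup.mk 1, w) = (QuotientGroup.mk 1, d k * w) := by
  obtain ⟨c, hc1, hc⟩ := exists_mul_equivariant ψ
  obtain ⟨f, hf⟩ := exists_induced_action hc
  obtain ⟨π, hπ⟩ := exists_perm_cosets hv hu
  have hvinj : Injective fun k => (QuotientGroup.mk (v k) : B ⧸ E) := by
    intro k l hkl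
    by_contra hne
    exact hv hne (QuotientGroup.eq.1 hkl)
  let twist : B ⧸ E → F :=
    extend (fun k => QuotientGroup.mk (v k)) (fun k => c (u k)⁻¹ * d k * (c (v k))⁻¹) 1
  let T : Equiv.Perm ((B ⧸ E) × F) := Equiv.prodShear π fun y => Equiv.mulLeft (twist y)
  have hT (k) (w : F) : T (QuotientGroup.mk (v k), c (v k) * w) =
      (QuotientGroup.mk (u k)⁻¹, c (u k)⁻¹ * (d k * w)) := by
    refine Prod.ext (hπ k) ?_
    change twist (QuotientGroup.mk (v k)) * (c (v k) * w) = _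
    rw [show twist (QuotientGroup.mk (v k)) = _ from hvinj.extend_apply _ _ k]
    group
  obtain ⟨Λ, hΛ, hΛt⟩ := ht _ f T
  have hbase (b : B) (w : F) :
      Λ b (QuotientGroup.mk 1, w) = (QuotientGroup.mk b, c b * w) := by
    have := hf b 1 w
    rwa [hc1, one_mul, mul_one, ← hΛ] at this
  refine ⟨Λ, fun e w => ?_, fun k w => ?_⟩
  · have he : c e = ψ e := by simpa [hc1] using hc 1 e
    have hmk : (QuotientGroup.mk (e : B) : B ⧸ E) = QuotientGroup.mk 1 := by
      simp [QuotientGroup.eq]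
    rw [hbase, he, hmk]
  · rw [map_mul, map_mul, hΛt, Equiv.Perm.mul_apply, Equiv.Perm.mul_apply, hbase, hT, hΛ, hf,
      mul_inv_cancel, hc1, one_mul]

lemma ExtendsFreely.exists_conj_mem (ht : ExtendsFreely B t)
    (hv : Pairwise fun k l => (v k)⁻¹ * v l ∉ E) (hu : Pairwise fun k l => u k * (u l)⁻¹ ∉ E)
    {g : B} {z : A} (hz : z * g * z⁻¹ ∈ adjoinLetters t E u v) : ∃ b : B, b * g * b⁻¹ ∈ E := by
  obtain ⟨Λ, hB, huv⟩ := ht.exists_perm_cosets_hom hv hu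
  have hfix : z * g * z⁻¹ ∈ (MulAction.stabilizer _ (QuotientGroup.mk 1 : B ⧸ E)).comap Λ := by
    refine adjoinLetters_le (fun e he => ?_) huv hz
    exact (hB e _).trans (QuotientGroup.eq.2 (by simpa using he))
  obtain ⟨b, hb⟩ := QuotientGroup.mk_surjective (Λ z⁻¹ (QuotientGroup.mk 1))
  have hg : g • (QuotientGroup.mk b : B ⧸ E) = QuotientGroup.mk b := by
    rw [← hB, hb, ← Equiv.Perm.mul_apply, ← map_mul]
    have := congrArg (Λ z⁻¹) (MulAction.mem_stabilizer_iff.1 (Subgroup.mem_comap.1 hfix))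
    rwa [Equiv.Perm.smul_def, ← Equiv.Perm.mul_apply, ← map_mul, ← mul_assoc, ← mul_assoc,
      inv_mul_cancel, one_mul] at this
  refine ⟨b⁻¹, ?_⟩
  simpa [mul_assoc] using QuotientGroup.eq.1 hg.symm

lemma ExtendsFreely.mem_of_mem_adjoinLetters (ht : ExtendsFreely B t)
    (hv : Pairwise fun k l => (v k)⁻¹ * v l ∉ E) (hu : Pairwise fun k l => u k * (u l)⁻¹ ∉ E)
    {b : B} (hb : (b : A) ∈ adjoinLetters t E u v) : b ∈ E := by
  obtain ⟨Λ, hB, huv⟩ := ht.exists_perm_cosets_hom hv hu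
  have hfix : (b : A) ∈ (MulAction.stabilizer _ (QuotientGroup.mk 1 : B ⧸ E)).comap Λ := by
    refine adjoinLetters_le (fun e he => ?_) huv hb
    exact (hB e _).trans (QuotientGroup.eq.2 (by simpa using he))
  simpa using QuotientGroup.eq.1 ((hB b _).symm.trans hfix)

end ExtendsFreely

namespace Marking

variable {A : Type u} [Group A] {M : Marking A} {L X : List A} {N : ℕ}

lemma span_le_stage {m : ℕ} (hL : ∀ z ∈ L, z ∈ M.stage m) (N : ℕ) (ε : ℕ → Bool) :
    M.span L N ε ≤ M.stage m := by
  refine span_le.2 ?_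
  rintro (k | i) hj
  · rw [gen_inl, List.getD_eq_getElem _ _ hj]
    exact hL _ (List.getElem_mem _)
  · exact M.twisted_mem_stage ε i m

lemma IsGood.exists_word_hom (h : M.IsGood L N X) (ε : ℕ → Bool) :
    ∃ ψ : M.span L N ε →* FreeGroup (ℕ ⊕ ℕ), ∀ j ∈ indexSet L.length N,
      ∀ hj : M.gen L ε j ∈ M.span L N ε, ψ ⟨M.gen L ε j, hj⟩ = .of j := by
  let W := wordsIn (indexSet L.length N)
  let f : W →* M.span L N ε := (FreeGroup.lift (M.gen L ε)).subgroupMap W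
  have hf : Bijective f :=
    ⟨fun w w' hww' => Subtype.ext (h.injOn ε w.2 w'.2 (congrArg Subtype.val hww')),
      MonoidHom.subgroupMap_surjective _ _⟩
  refine ⟨W.subtype.comp (MulEquiv.ofBijective f hf).symm.toMonoidHom, fun j hj hgen => ?_⟩
  have hfj : MulEquiv.ofBijective f hf ⟨.of j, of_mem_wordsIn hj⟩ = ⟨M.gen L ε j, hgen⟩ :=
    Subtype.ext FreeGroup.lift_apply_of
  change W.subtype ((MulEquiv.ofBijective f hf).symm _) = _
  rw [← hfj, MulEquiv.symm_apply_apply, W.subtype_apply]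

lemma gen_append_ofFn_cases {n : ℕ} {τ : Fin n → A} {ε : ℕ → Bool} {j : ℕ ⊕ ℕ}
    (hj : j ∈ indexSet (L ++ List.ofFn τ).length N) :
    (j ∈ indexSet L.length N ∧ M.gen (L ++ List.ofFn τ) ε j = M.gen L ε j) ∨
      ∃ k : Fin n, j = .inl (L.length + k) ∧ M.gen (L ++ List.ofFn τ) ε j = τ k := by
  rcases j with k | i
  · rcases lt_or_ge k L.length with hk | hk
    · exact .inl ⟨hk, gen_append_left hk⟩
    · obtain ⟨l, rfl⟩ := Nat.exists_eq_add_of_le hk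
      have hl : l < n := by simpa using hj
      exact .inr ⟨⟨l, hl⟩, rfl, by simp [hl]⟩
  · exact .inl ⟨hj, rfl⟩

section Letters

variable {m n : ℕ} {u v : Fin n → M.stage m} {ε : ℕ → Bool}

lemma span_append_le_adjoinLetters (hL : ∀ z ∈ L, z ∈ M.stage m) :
    M.span (L ++ List.ofFn fun k => u k * M.letter m * v k) N ε ≤
      adjoinLetters (M.letter m) ((M.span L N ε).subgroupOf (M.stage m)) u v := by
  refine span_le.2 fun j hj => ?_
  rcases gen_append_ofFn_cases hj with ⟨hj', he⟩ | ⟨k, -, he⟩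
  · rw [he]
    have hgen := gen_mem_span (M := M) (ε := ε) hj'
    exact Subgroup.mem_sup_left (Subgroup.mem_map.2
      ⟨⟨_, span_le_stage hL N ε hgen⟩, Subgroup.mem_subgroupOf.2 hgen, rfl⟩)
  · rw [he]
    exact Subgroup.mem_sup_right (Subgroup.subset_closure ⟨k, rfl⟩)

lemma IsGood.eq_one_of_lift_append (h : M.IsGood L N X) (hL : ∀ z ∈ L, z ∈ M.stage m)
    (hv : Pairwise fun k l => (v k)⁻¹ * v l ∉ (M.span L N ε).subgroupOf (M.stage m))
    (hu : Pairwise fun k l => u k * (u l)⁻¹ ∉ (M.span L N ε).subgroupOf (M.stage m))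
    {w : FreeGroup (ℕ ⊕ ℕ)}
    (hw : w ∈ wordsIn (indexSet (L ++ List.ofFn fun k => u k * M.letter m * v k).length N))
    (h1 : FreeGroup.lift (M.gen (L ++ List.ofFn fun k => u k * M.letter m * v k) ε) w = 1) :
    w = 1 := by
  obtain ⟨ψ, hψ⟩ := h.exists_word_hom ε
  obtain ⟨Λ, hΛ, huv⟩ := (M.extendsFreely m).exists_perm_prod_hom hv hu
    (ψ.comp (Subgroup.subgroupOfEquivOfLe (span_le_stage hL N ε)).toMonoidHom)
    fun k => .of (.inl (L.length + k))
  set L' := L ++ List.ofFn fun k => u k * M.letter m * v k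
  have letter_act (j) (hj : j ∈ indexSet L'.length N) (x : FreeGroup (ℕ ⊕ ℕ)) :
      Λ (M.gen L' ε j) (QuotientGroup.mk 1, x) = (QuotientGroup.mk 1, .of j * x) := by
    rcases gen_append_ofFn_cases (M := M) hj with ⟨hj', he⟩ | ⟨k, rfl, he⟩
    · have hgen := gen_mem_span (M := M) (ε := ε) hj'
      rw [he, ← hψ j hj' hgen]
      exact hΛ ⟨⟨_, span_le_stage hL N ε hgen⟩, hgen⟩ x
    · rw [he, huv]
  have word_act {w} (hw : w ∈ wordsIn (indexSet L'.length N)) :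
      ∀ x, Λ (FreeGroup.lift (M.gen L' ε) w) (QuotientGroup.mk 1, x) =
        (QuotientGroup.mk 1, w * x) := by
    induction hw using Subgroup.closure_induction with
    | mem _ hw => obtain ⟨j, hj, rfl⟩ := hw; simpa using letter_act j hj
    | one => simp
    | mul a b _ _ ha hb =>
      intro x
      rw [map_mul, map_mul, Equiv.Perm.mul_apply, hb, ha, mul_assoc]
    | inv a _ ha =>
      intro x
      rw [map_inv, map_inv, Equiv.Perm.inv_eq_iff_eq, ha, mul_inv_cancel_left]
  have := word_act hw 1
  rw [h1, map_one, Equiv.Perm.one_apply, mul_one] at this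
  exact (congrArg Prod.snd this).symm

lemma IsGood.append_ofFn (h : M.IsGood L N X) (hL : ∀ z ∈ L, z ∈ M.stage m)
    (hX : ∀ z ∈ X, z ∈ M.stage m)
    (hv : ∀ ε, Pairwise fun k l => (v k)⁻¹ * v l ∉ (M.span L N ε).subgroupOf (M.stage m))
    (hu : ∀ ε, Pairwise fun k l => u k * (u l)⁻¹ ∉ (M.span L N ε).subgroupOf (M.stage m)) :
    M.IsGood (L ++ List.ofFn fun k => u k * M.letter m * v k) N X where
  free ε _ hw h1 := h.eq_one_of_lift_append hL (hv ε) (hu ε) hw h1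
  conj ε z g hg hz := by
    obtain ⟨b, hb⟩ := (M.extendsFreely m).exists_conj_mem (hv ε) (hu ε)
      (g := ⟨g, M.stage_mono m.zero_le (M.core_le hg)⟩) (span_append_le_adjoinLetters hL hz)
    exact h.conj ε b g hg hb
  avoid ε x hx hx' := h.avoid ε x hx <| Subgroup.mem_subgroupOf.1 <|
    (M.extendsFreely m).mem_of_mem_adjoinLetters (hv ε) (hu ε) (b := ⟨x, hX x hx⟩)
      (span_append_le_adjoinLetters hL hx')

end Letters

lemma IsGood.exists_append_letters (h : M.IsGood L N X) (uv : List (A × A))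
    (huv : uv.Pairwise fun p q => p.2⁻¹ * q.2 ∈ X ∧ p.1 * q.1⁻¹ ∈ X) :
    ∃ t, M.IsGood (L ++ uv.map fun p => p.1 * t * p.2) N X := by
  obtain ⟨m, hm⟩ := M.exists_forall_mem_stage (L ++ X ++ uv.map Prod.fst ++ uv.map Prod.snd)
  simp only [List.mem_append, or_imp, forall_and] at hm
  obtain ⟨⟨⟨hL, hX⟩, hfst⟩, hsnd⟩ := hm
  let u : Fin uv.length → M.stage m := fun k =>
    ⟨uv[k].1, hfst _ (List.mem_map_of_mem (List.getElem_mem k.2))⟩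
  let v : Fin uv.length → M.stage m := fun k =>
    ⟨uv[k].2, hsnd _ (List.mem_map_of_mem (List.getElem_mem k.2))⟩
  have mem_avoided {k l} (hkl : k < l) : (v k : A)⁻¹ * v l ∈ X ∧ (u k : A) * (u l : A)⁻¹ ∈ X :=
    List.pairwise_iff_getElem.1 huv k l k.2 l.2 hkl
  have hv (ε) : Pairwise fun k l => (v k)⁻¹ * v l ∉ (M.span L N ε).subgroupOf (M.stage m) := by
    have : Std.Symm fun k l => (v k)⁻¹ * v l ∉ (M.span L N ε).subgroupOf (M.stage m) :=
      ⟨fun k l hkl hlk => hkl (by simpa using inv_mem hlk)⟩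
    exact .of_lt fun k l hkl hmem => h.avoid ε _ (mem_avoided hkl).1 hmem
  have hu (ε) : Pairwise fun k l => u k * (u l)⁻¹ ∉ (M.span L N ε).subgroupOf (M.stage m) := by
    have : Std.Symm fun k l => u k * (u l)⁻¹ ∉ (M.span L N ε).subgroupOf (M.stage m) :=
      ⟨fun k l hkl hlk => hkl (by simpa using inv_mem hlk)⟩
    exact .of_lt fun k l hkl hmem => h.avoid ε _ (mem_avoided hkl).2 hmem
  have hmap : (uv.map fun p => p.1 * M.letter m * p.2) =
      List.ofFn fun k => (u k : A) * M.letter m * v k := by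
    apply List.ext_getElem <;> simp [u, v]
  exact ⟨M.letter m, hmap ▸ h.append_ofFn hL hX hv hu⟩

end Marking

/-! ### Words over a good list -/

namespace Marking

variable {A : Type u} [Group A] {M : Marking A} {L X : List A} {N : ℕ} {ε : ℕ → Bool}

lemma IsGood.of_append_left {L' : List A} (h : M.IsGood (L ++ L') N X) : M.IsGood L N X := by
  have gen_eq (ε) {j} (hj : j ∈ indexSet L.length N) : M.gen L ε j = M.gen (L ++ L') ε j := by
    rcases j with k | i
    · exact (gen_append_left hj).symm
    · rfl
  have index_le : indexSet L.length N ⊆ indexSet (L ++ L').length N := by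
    rintro (k | i) hj
    · simp at hj ⊢; omega
    · exact hj
  have span_le_span (ε) : M.span L N ε ≤ M.span (L ++ L') N ε :=
    span_le.2 fun j hj => gen_eq ε hj ▸ gen_mem_span (index_le hj)
  refine ⟨fun ε w hw h1 => h.free ε w (wordsIn_mono index_le hw) ?_,
    fun ε z g hg hz => h.conj ε z g hg (span_le_span ε hz),
    fun ε x hx hx' => h.avoid ε x hx (span_le_span ε hx')⟩
  rw [← h1]
  exact eqOn_wordsIn (fun j hj => by simpa using (gen_eq ε hj).symm) hw

lemma listClosure_le_map {κ : Type*} (f : FreeGroup κ →* FreeGroup (ℕ ⊕ ℕ)) {L' : List A}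
    (hf : ∀ z ∈ L', ∃ k, f (.of k) ∈ wordsIn (indexSet L.length N) ∧
      FreeGroup.lift (M.gen L ε) (f (.of k)) = z) :
    listClosure L' ≤
      ((wordsIn (indexSet L.length N)).comap f).map ((FreeGroup.lift (M.gen L ε)).comp f) :=
  (Subgroup.closure_le _).2 fun z hz =>
    let ⟨k, hk, hkz⟩ := hf z hz
    ⟨.of k, hk, hkz⟩

lemma exists_of_inl_eq {z : A} (hz : z ∈ L) (N : ℕ) (ε : ℕ → Bool) :
    ∃ k, .of (.inl k) ∈ wordsIn (indexSet L.length N) ∧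
      FreeGroup.lift (M.gen L ε) (.of (.inl k)) = z := by
  obtain ⟨k, hk, rfl⟩ := List.getElem_of_mem hz
  exact ⟨k, of_mem_wordsIn hk, by simp [hk]⟩

lemma exists_map_inl_eq {z : A} (hz : z ∈ listClosure L) (N : ℕ) (ε : ℕ → Bool) :
    ∃ c : FreeGroup ℕ, FreeGroup.map Sum.inl c ∈ wordsIn (indexSet L.length N) ∧
      FreeGroup.lift (M.gen L ε) (FreeGroup.map Sum.inl c) = z :=
  listClosure_le_map (FreeGroup.map Sum.inl)
    (fun z hz => by simpa using exists_of_inl_eq (M := M) hz N ε) hz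

lemma exists_substVar_eq {g : FreeGroup (ℕ ⊕ ℕ)} (hg : g ∈ wordsIn (indexSet L.length N)) {z : A}
    (hz : z ∈ listClosure (L ++ [FreeGroup.lift (M.gen L ε) g])) :
    ∃ c, substVar g c ∈ wordsIn (indexSet L.length N) ∧
      FreeGroup.lift (M.gen L ε) (substVar g c) = z := by
  refine listClosure_le_map (substVar g) (fun z hz => ?_) hz
  rcases List.mem_append.1 hz with hz | hz
  · obtain ⟨k, hk⟩ := exists_of_inl_eq (M := M) hz N ε
    exact ⟨some k, by simpa only [substVar_of_some] using hk⟩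
  · rw [List.mem_singleton] at hz
    exact ⟨none, by rwa [substVar_of_none], by rw [substVar_of_none, hz]⟩

lemma lift_map_inl_mem_listClosure (c : FreeGroup ℕ) :
    FreeGroup.lift (M.gen L ε) (FreeGroup.map Sum.inl c) ∈ listClosure L :=
  map_mem_of_mem_wordsIn ((FreeGroup.lift (M.gen L ε)).comp (FreeGroup.map Sum.inl))
    (I := Set.univ) (fun k _ => by simpa using getD_mem_listClosure L k) (by simp [wordsIn])

lemma IsGood.exists_map_inl_eq (h : M.IsGood L N X) {w : FreeGroup (ℕ ⊕ ℕ)}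
    (hw : w ∈ wordsIn (indexSet L.length N))
    (hz : FreeGroup.lift (M.gen L ε) w ∈ listClosure L) :
    ∃ c : FreeGroup ℕ, FreeGroup.map Sum.inl c = w := by
  obtain ⟨c, hc, hcw⟩ := Marking.exists_map_inl_eq (M := M) hz N ε
  exact ⟨c, h.injOn ε hc hw hcw⟩

lemma IsGood.lift_elim_one_of_eq_one (h : M.IsGood L N X) {w : FreeGroup (ℕ ⊕ ℕ)}
    (hw : w ∈ wordsIn (indexSet L.length N))
    (hz : FreeGroup.lift (M.gen L ε) w ∈ listClosure L) :
    FreeGroup.lift (Sum.elim (fun _ => 1) FreeGroup.of : _ → FreeGroup ℕ) w = 1 := by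
  obtain ⟨c, rfl⟩ := h.exists_map_inl_eq hw hz
  exact (lift_map_apply _ _ c).trans (DFunLike.congr_fun (FreeGroup.lift.apply_symm_apply 1) c)

lemma lift_of_inr (i : ℕ) :
    FreeGroup.lift (M.gen L fun _ => false) (.of (.inr i)) = M.tail i := by
  rw [FreeGroup.lift_apply_of, gen_inr, twisted_false]

lemma of_inr_mem_wordsIn {n i : ℕ} (hi : N ≤ i) : .of (.inr i) ∈ wordsIn (indexSet n N) :=
  of_mem_wordsIn hi

lemma IsGood.tail_notMem_listClosure (h : M.IsGood L N X) {i : ℕ} (hi : N ≤ i) :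
    M.tail i ∉ listClosure L := by
  intro hz
  rw [← lift_of_inr (L := L)] at hz
  simpa using h.lift_elim_one_of_eq_one (of_inr_mem_wordsIn hi) hz

lemma IsGood.inv_tail_mul_tail_notMem_listClosure (h : M.IsGood L N X) {i j : ℕ} (hi : N ≤ i)
    (hj : N ≤ j) (hij : i ≠ j) : (M.tail i)⁻¹ * M.tail j ∉ listClosure L := by
  intro hz
  rw [← lift_of_inr (L := L), ← lift_of_inr (L := L), ← map_inv, ← map_mul] at hz
  have := h.lift_elim_one_of_eq_one
    (mul_mem (inv_mem (of_inr_mem_wordsIn hi)) (of_inr_mem_wordsIn hj)) hz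
  exact hij (FreeGroup.of_injective (inv_mul_eq_one.1 (by simpa using this)))

lemma IsGood.tail_conj_notMem_listClosure (h : M.IsGood L N X) {i : ℕ} (hi : N ≤ i) {z : A}
    (hz : z ∈ listClosure L) (hz1 : z ≠ 1) : M.tail i * z * (M.tail i)⁻¹ ∉ listClosure L := by
  intro hz'
  obtain ⟨c, hc, rfl⟩ := Marking.exists_map_inl_eq (M := M) hz N fun _ => false
  have hi' := of_inr_mem_wordsIn (n := L.length) hi
  rw [← lift_of_inr (L := L), ← map_inv, ← map_mul, ← map_mul] at hz'
  obtain ⟨d, hd⟩ := h.exists_map_inl_eq (mul_mem (mul_mem hi' hc) (inv_mem hi')) hz'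
  let kill : FreeGroup (ℕ ⊕ ℕ) →* FreeGroup ℕ := FreeGroup.lift (Sum.elim FreeGroup.of fun _ => 1)
  have kill_map (e : FreeGroup ℕ) : kill (FreeGroup.map Sum.inl e) = e := by
    rw [lift_map_apply, Sum.elim_comp_inl, FreeGroup.lift_of_apply]
  have hdc : d = c := by
    have := congrArg kill hd
    rw [map_mul, map_mul, map_inv, kill_map, kill_map] at this
    simpa [kill] using this
  have hcomm : Commute (FreeGroup.of (.inr i)) (FreeGroup.map Sum.inl c) := by
    rw [hdc, eq_mul_inv_iff_mul_eq] at hd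
    exact hd.symm
  obtain ⟨k, hk⟩ := exists_zpow_eq_of_commute_of hcomm
  have hc1 : c = 1 := by
    rw [← kill_map c, ← hk, map_zpow]
    simp [kill]
  exact hz1 (by simp [hc1])

lemma IsGood.append_range_tail (h : M.IsGood L N X) (r : ℕ) :
    M.IsGood (L ++ (List.range r).map fun i => M.tail (N + i)) (N + r) X := by
  induction r with
  | zero => simpa using h
  | succ r ih =>
    rw [List.range_succ, List.map_append, ← List.append_assoc]
    exact ih.append_tail le_rfl

/-- Express the elements as words over the good list; the equality of words in the free group is
then `const_or_conj_of_pairwise_substVar_mul_mem_range`. -/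
lemma IsGood.mem_listClosure_or_eq_conj_tail (h : M.IsGood L N X) {g : ℕ → A}
    (hg : ∀ i, N ≤ i → g i ∈ listClosure (L ++ [M.tail i]))
    (hgg : ∀ i j, N ≤ i → N ≤ j → i ≠ j →
      g i * g j ∈ listClosure (L ++ [M.tail i * M.tail j])) :
    (∀ i, N ≤ i → g i ∈ listClosure L) ∨
      ∃ c ∈ listClosure L, ∀ i, N ≤ i → g i = c * M.tail i * c⁻¹ := by
  set ev := FreeGroup.lift (M.gen L fun _ => false) with hev
  have ht {i} (hi : N ≤ i) := of_inr_mem_wordsIn (n := L.length) hi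
  have exists_word (i) : ∃ w, N ≤ i → substVar (.of (.inr i)) w ∈ wordsIn (indexSet L.length N) ∧
      ev (substVar (.of (.inr i)) w) = g i := by
    by_cases hi : N ≤ i
    · have := hg i hi
      rw [← lift_of_inr (L := L)] at this
      exact (exists_substVar_eq (ht hi) this).imp fun _ hw _ => hw
    · exact ⟨1, fun hi' => absurd hi' hi⟩
  choose w hw using exists_word
  have hpair : (Set.Ici N).Pairwise fun i j =>
      substVar (.of (.inr i)) (w i) * substVar (.of (.inr j)) (w j) ∈
        (substVar (.of (.inr i) * .of (.inr j))).range := by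
    intro i hi j hj hij
    have := hgg i j hi hj hij
    rw [← lift_of_inr (L := L), ← lift_of_inr (L := L), ← map_mul] at this
    obtain ⟨u, hu, hug⟩ := exists_substVar_eq (mul_mem (ht hi) (ht hj)) this
    refine ⟨u, h.injOn (fun _ => false) hu (mul_mem (hw i hi).1 (hw j hj).1) ?_⟩
    rw [hug, map_mul, (hw i hi).2, (hw j hj).2]
  rcases const_or_conj_of_pairwise_substVar_mul_mem_range (Set.Ici_infinite N) hpair with
    hconst | ⟨c, hc⟩
  · refine .inl fun i hi => ?_
    obtain ⟨k, hk⟩ := hconst i hi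
    rw [← (hw i hi).2, hk, substVar_constWord]
    exact lift_map_inl_mem_listClosure k
  · refine .inr ⟨_, lift_map_inl_mem_listClosure (M := M) (ε := fun _ => false) c, fun i hi => ?_⟩
    rw [← (hw i hi).2, hc i hi]
    simp only [map_mul, map_inv, substVar_constWord, substVar_of_none, hev, lift_of_inr]

end Marking

/-! ### One-sided extensions -/

namespace Marking

variable {A : Type u} [Group A] {M : Marking A} {L X : List A} {N : ℕ}

lemma IsGood.exists_conj_notMem_listClosure (h : M.IsGood L N X) {a : A} (ha : a ≠ 1) :
    ∃ z, z * a * z⁻¹ ∉ listClosure L := by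
  by_cases haL : a ∈ listClosure L
  · exact ⟨M.tail N, h.tail_conj_notMem_listClosure le_rfl haL ha⟩
  · exact ⟨1, by simpa using haL⟩

lemma IsGood.exists_tail_notMem_listClosure (h : M.IsGood L N X) (x : A) :
    ∃ i, M.tail i ∉ listClosure L ∧ x * M.tail i ∉ listClosure L := by
  by_cases hx : x * M.tail N ∈ listClosure L
  · refine ⟨N + 1, h.tail_notMem_listClosure (by omega), fun hx' => ?_⟩
    apply h.inv_tail_mul_tail_notMem_listClosure (i := N) (j := N + 1) le_rfl (by omega) (by omega)
    simpa [mul_assoc] using mul_mem (inv_mem hx) hx'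
  · exact ⟨N, h.tail_notMem_listClosure le_rfl, hx⟩

lemma IsGood.exists_append_letter_conj (h : M.IsGood L N X) {z : A} (hz : z⁻¹ ∈ X) :
    ∃ t, M.IsGood (L ++ [t, z * t * z⁻¹]) N X := by
  simpa using h.exists_append_letters [(1, 1), (z, z⁻¹)] (by simpa using hz)

lemma IsGood.exists_append_conj_tail (h : M.IsGood L N X) (x : A) :
    ∃ i t N', N ≤ N' ∧ M.IsGood (L ++ [t, x * M.tail i * t * (M.tail i)⁻¹]) N' X := by
  obtain ⟨i, hi, hxi⟩ := h.exists_tail_notMem_listClosure x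
  obtain ⟨N', hN', h'⟩ := h.exists_avoiding [(M.tail i)⁻¹, (x * M.tail i)⁻¹] (by
    simp only [List.forall_mem_cons, inv_mem_iff]
    exact ⟨hi, hxi, by simp⟩)
  obtain ⟨t, ht⟩ := h'.exists_append_letters [(1, 1), (x * M.tail i, (M.tail i)⁻¹)] (by simp)
  exact ⟨i, t, N', hN', by simpa using ht.mono le_rfl (by simp)⟩

lemma IsGood.exists_append_conjugates (h : M.IsGood L N X) {r : A} (hr : r ∈ listClosure L) :
    ∃ a b t N', N ≤ N' ∧ M.IsGood (L ++ [t * r, a⁻¹ * t * a, b⁻¹ * t * b]) N' X := by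
  have ha := h.tail_notMem_listClosure (i := N) le_rfl
  have hb := h.tail_notMem_listClosure (i := N + 1) (by omega)
  have hab := h.inv_tail_mul_tail_notMem_listClosure (i := N) (j := N + 1) le_rfl (by omega)
    (by omega)
  generalize M.tail N = a, M.tail (N + 1) = b at *
  obtain ⟨N', hN', h'⟩ := h.exists_avoiding [a, b, a⁻¹ * b, r⁻¹ * a, r⁻¹ * b] (by
    simp only [List.forall_mem_cons, Subgroup.mul_mem_cancel_left _ (inv_mem hr)]
    exact ⟨ha, hb, hab, ha, hb, by simp⟩)
  obtain ⟨t, ht⟩ := h'.exists_append_letters [(1, r), (a⁻¹, a), (b⁻¹, b)] (by simp)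
  exact ⟨a, b, t, N', hN', by simpa using ht.mono le_rfl (List.subset_append_right _ _)⟩

variable (M) in
/-- The elements `x`, `y`, `k` of a marking, as the values of the letters of `FreeGroup (Fin 3)`.
Words in these letters test how an endomorphism moves the marking. -/
def marks : Fin 3 → A := ![M.x, M.y, M.k]

@[simp] lemma marks_zero : M.marks 0 = M.x := rfl

@[simp] lemma marks_one : M.marks 1 = M.y := rfl

@[simp] lemma marks_two : M.marks 2 = M.k := rfl

/-- The word in `x`, `y`, `k` which spells the `i`-th tail letter, multiplied by `k` if `b` is
`true`. -/
def testWord (b : Bool) (i : ℕ) : FreeGroup (Fin 3) :=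
  twistedTail (.of 0) (.of 1) (.of 2) (fun _ => b) i

@[simp] lemma lift_testWord_false (v : Fin 3 → A) (i : ℕ) :
    FreeGroup.lift v (testWord false i) = tailLetter (v 0) (v 1) i := by
  simp [testWord, twistedTail, tailLetter]

@[simp] lemma lift_testWord_true (v : Fin 3 → A) (i : ℕ) :
    FreeGroup.lift v (testWord true i) = v 2 * tailLetter (v 0) (v 1) i := by
  simp [testWord, twistedTail, tailLetter]

lemma lift_marks_testWord (b : Bool) (i : ℕ) :
    FreeGroup.lift M.marks (testWord b i) = M.twisted (fun _ => b) i := by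
  cases b <;> simp [twistedTail]

lemma IsGood.append_testWord (h : M.IsGood L N X) {i : ℕ} (hi : N ≤ i) (b : Bool) :
    M.IsGood (L ++ [FreeGroup.lift M.marks (testWord b i)]) (i + 1) X :=
  lift_marks_testWord (M := M) b i ▸ h.append_twisted hi b

/-- A triple `v` cannot pass all tests unless it acts on the tail letters as conjugation. -/
lemma IsGood.exists_testWord_or_eq_conj (h : M.IsGood L N X) {v : Fin 3 → A}
    (hv : v 2 ∉ listClosure L) :
    (∃ w N', N ≤ N' ∧ M.IsGood (L ++ [FreeGroup.lift M.marks w]) N' X ∧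
      FreeGroup.lift v w ∉ listClosure (L ++ [FreeGroup.lift M.marks w])) ∨
    ∃ c ∈ listClosure L, ∀ i, N ≤ i → tailLetter (v 0) (v 1) i = c * M.tail i * c⁻¹ := by
  rw [or_iff_not_imp_left]
  intro hpass
  push Not at hpass
  have tail_mem (i) (hi : N ≤ i) : tailLetter (v 0) (v 1) i ∈ listClosure (L ++ [M.tail i]) := by
    simpa using
      hpass (testWord false i) (i + 1) (by omega) (h.append_testWord hi false)
  have mul_tail_mem (i j) (hi : N ≤ i) (hj : N ≤ j) (hij : i ≠ j) :
      tailLetter (v 0) (v 1) i * tailLetter (v 0) (v 1) j ∈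
        listClosure (L ++ [M.tail i * M.tail j]) := by
    simpa using
      hpass (testWord false i * testWord false j) (max i j + 1) (by omega)
        (by simpa using h.append_tail_mul_tail hi hj hij)
  refine (h.mem_listClosure_or_eq_conj_tail tail_mem mul_tail_mem).resolve_left fun hmem => ?_
  obtain ⟨N', hN', hv'⟩ := h.exists_notMem_span hv
  have twisted_mem := hpass (testWord true N') (N' + 1) (by omega) (h.append_testWord hN' true)
  rw [lift_marks_testWord, lift_testWord_true] at twisted_mem
  have v_mem := (Subgroup.mul_mem_cancel_right _
    (listClosure_mono (List.subset_append_left _ _) (hmem N' hN'))).1 twisted_mem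
  refine hv' (fun _ => true) ((Subgroup.closure_le _).2 (fun z hz => ?_) v_mem)
  rcases List.mem_append.1 hz with hz | hz
  · obtain ⟨k, hk, rfl⟩ := List.getElem_of_mem hz
    simpa [hk] using gen_mem_span (M := M) (ε := fun _ => true) (inl_mem_indexSet (N := N').2 hk)
  · rw [List.mem_singleton.1 hz, ← gen_inr]
    exact gen_mem_span (inr_mem_indexSet.2 le_rfl)

lemma IsGood.exists_testWord_notMem (h : M.IsGood L N X) {v : Fin 3 → A} {L' : List A}
    (hv : v 2 ∉ listClosure L') :
    ∃ w, M.IsGood (L ++ [FreeGroup.lift M.marks w]) (N + 1) X ∧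
      FreeGroup.lift v w ∉ listClosure L' := by
  by_cases htail : tailLetter (v 0) (v 1) N ∈ listClosure L'
  · refine ⟨testWord true N, h.append_testWord le_rfl true, ?_⟩
    rwa [lift_testWord_true, Subgroup.mul_mem_cancel_right _ htail]
  · exact ⟨testWord false N, h.append_testWord le_rfl false, by rwa [lift_testWord_false]⟩

end Marking

/-! ### Pairings of two copies of a group -/

section Pairing

variable {A : Type u} {α : Type*} {P : Set (Bool → A)} {s : Bool} {a b : A}

/-- The function on `Bool` with value `q.1` at `s` and `q.2` at `!s`. -/
def orient (s : Bool) (q : α × α) (b : Bool) : α := if b = s then q.1 else q.2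

@[simp] lemma orient_self (s : Bool) (q : α × α) : orient s q s = q.1 := if_pos rfl

@[simp] lemma orient_not (s : Bool) (q : α × α) : orient s q (!s) = q.2 :=
  if_neg (Bool.not_ne_self s)

/-- The element `a` of the copy `s` of `A` is paired by `P` with the element `b` of the other
copy. -/
def Paired (P : Set (Bool → A)) (s : Bool) (a b : A) : Prop := ∃ p ∈ P, p s = a ∧ p (!s) = b

lemma Paired.mono {P' : Set (Bool → A)} (hP : P ⊆ P') (h : Paired P s a b) : Paired P' s a b :=
  let ⟨p, hp, hab⟩ := h; ⟨p, hP hp, hab⟩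

lemma Paired.symm (h : Paired P s a b) : Paired P (!s) b a :=
  let ⟨p, hp, ha, hb⟩ := h; ⟨p, hp, hb, by rwa [Bool.not_not]⟩

/-- The homomorphisms `j true` and `j false` identify the elements paired by `P`. -/
def Compatible {K : Type*} [Group A] [Group K] (P : Set (Bool → A)) (j : Bool → A →* K) : Prop :=
  ∀ p ∈ P, ∀ b b', j b (p b) = j b' (p b')

lemma Compatible.apply_eq {K : Type*} [Group A] [Group K] {j : Bool → A →* K}
    (hj : Compatible P j) (h : Paired P s a b) : j s a = j (!s) b := by
  obtain ⟨p, hp, rfl, rfl⟩ := h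
  exact hj p hp _ _

end Pairing

namespace Marking

variable {A : Type u} [Group A]

/-- A finite approximation to a pair of free subgroups of `A` with identified bases: the pairs of
basis elements chosen so far and, for each of the two sides, a good configuration made of them. -/
structure State (M : Marking A) where
  pairs : List (Bool → A)
  bound : Bool → ℕ
  avoided : Bool → List A
  isGood (b : Bool) : M.IsGood (pairs.map (· b)) (bound b) (avoided b)

variable {M : Marking A}

namespace State

/-- The basis elements chosen on the side `b`. -/
abbrev side (σ : State M) (b : Bool) : List A := σ.pairs.map (· b)

/-- The set of pairs of basis elements. -/
abbrev pairSet (σ : State M) : Set (Bool → A) := {p | p ∈ σ.pairs}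

instance : Preorder (State M) where
  le σ τ := σ.pairs <+: τ.pairs ∧ ∀ b, σ.bound b ≤ τ.bound b ∧ σ.avoided b ⊆ τ.avoided b
  le_refl σ := ⟨List.prefix_rfl, fun _ => ⟨le_rfl, List.Subset.refl _⟩⟩
  le_trans σ τ ρ h h' := ⟨h.1.trans h'.1, fun b =>
    ⟨(h.2 b).1.trans (h'.2 b).1, List.Subset.trans (h.2 b).2 (h'.2 b).2⟩⟩

instance : Inhabited (State M) := ⟨⟨[], fun _ => 0, fun _ => [], fun _ => isGood_nil M⟩⟩

variable {σ τ : State M} {s b : Bool}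

lemma pairSet_mono (h : σ ≤ τ) : σ.pairSet ⊆ τ.pairSet := h.1.subset

lemma apply_mem_listClosure {p : Bool → A} (hp : p ∈ σ.pairs) (b : Bool) :
    p b ∈ listClosure (σ.side b) :=
  mem_listClosure (List.mem_map_of_mem (f := (· b)) hp)

lemma exists_extend (σ : State M) (s : Bool) (l : List (A × A)) {N N' : ℕ} {X X' : List A}
    (h : M.IsGood (σ.side s ++ l.map Prod.fst) N X)
    (h' : M.IsGood (σ.side (!s) ++ l.map Prod.snd) N' X') (hN : σ.bound s ≤ N)
    (hN' : σ.bound (!s) ≤ N') (hX : σ.avoided s ⊆ X) (hX' : σ.avoided (!s) ⊆ X') :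
    ∃ τ, σ ≤ τ ∧ τ.pairs = σ.pairs ++ l.map (orient s) ∧ τ.bound = orient s (N, N') ∧
      τ.avoided = orient s (X, X') ∧ ∀ q ∈ l, Paired τ.pairSet s q.1 q.2 := by
  refine ⟨⟨σ.pairs ++ l.map (orient s), orient s (N, N'), orient s (X, X'), ?_⟩,
    ⟨List.prefix_append _ _, ?_⟩, rfl, rfl, rfl, fun q hq => ⟨orient s q,
      List.mem_append_right _ (List.mem_map_of_mem hq), by simp⟩⟩ <;> rw [Bool.forall_bool' s]
  · simp only [List.map_append, List.map_map, comp_def, orient_self, orient_not]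
    exact ⟨h, h'⟩
  · simp only [orient_self, orient_not]
    exact ⟨⟨hN, hX⟩, hN', hX'⟩

lemma exists_avoiding (σ : State M) (s : Bool) (zs : List A)
    (hz : ∀ z ∈ zs, z ∉ listClosure (σ.side s)) :
    ∃ τ, σ ≤ τ ∧ τ.pairs = σ.pairs ∧ zs ⊆ τ.avoided s := by
  obtain ⟨N, hN, h⟩ := (σ.isGood s).exists_avoiding zs hz
  obtain ⟨τ, hστ, hpairs, -, havoided, -⟩ := σ.exists_extend s [] (by simpa using h)
    (by simpa using σ.isGood !s) hN le_rfl (List.subset_append_right _ _) (List.Subset.refl _)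
  exact ⟨τ, hστ, by simpa using hpairs, by simp [havoided]⟩

lemma exists_extend_tail (σ : State M) (s : Bool) (l : List A) {N : ℕ}
    (h : M.IsGood (σ.side s ++ l) N (σ.avoided s)) (hN : σ.bound s ≤ N) :
    ∃ τ, σ ≤ τ ∧ τ.side s = σ.side s ++ l ∧ τ.bound s = N ∧ τ.avoided s = σ.avoided s ∧
      ∀ k (hk : k < l.length), Paired τ.pairSet s l[k] (M.tail (σ.bound (!s) + k)) := by
  have h' := (σ.isGood !s).append_range_tail l.length
  obtain ⟨τ, hστ, hpairs, hbound, havoided, hpaired⟩ := σ.exists_extend s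
    (l.zip ((List.range l.length).map fun i => M.tail (σ.bound (!s) + i)))
    (by simpa [List.map_fst_zip] using h) (by simpa [List.map_snd_zip] using h') hN (by omega)
    (List.Subset.refl _) (List.Subset.refl _)
  refine ⟨τ, hστ, by simp [side, hpairs, comp_def, List.map_fst_zip], by simp [hbound],
    by simp [havoided], fun k hk => hpaired (l[k], M.tail (σ.bound (!s) + k)) ?_⟩
  exact List.mem_iff_getElem.2 ⟨k, by simpa, by simp⟩

end State

end Marking

/-! ### Requirements on a generic pairing -/

/-- What is known about a pair of subgroups of `A` with identified bases: some pairs of basis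
elements, and for each of the two sides some elements inside and some outside the subgroup. -/
structure Facts (A : Type u) where
  pairs : Set (Bool → A)
  inside : Bool → Set A
  outside : Bool → Set A

instance (A : Type u) : Preorder (Facts A) :=
  Preorder.lift fun F => (F.pairs, F.inside, F.outside)

/-- The properties, other than freeness and malnormality of the marked core, imposed on a generic
pairing. A triple `v : Fin 3 → A` stands for a possible image of the elements `x`, `y`, `k` of a
marking. -/
inductive Requirement (A : Type u) : Type u
  | generate (s : Bool) (x : A)
  | expel (s : Bool) (x : A)
  | sameSide (s : Bool) (v : Fin 3 → A)
  | otherSide (s : Bool) (v : Fin 3 → A)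
  | distinguish (v v' : Fin 3 → A)
  | consecutive (s : Bool)
  | twist (s : Bool)
  | absorb (p : Σ _ : Bool, A) (l : List (Σ _ : Bool, A)) (x : A)
  deriving Countable

variable {A : Type u} [Group A]

/-- The facts `F` guarantee the requirement. -/
def Requirement.Met (M : Marking A) (F : Facts A) : Requirement A → Prop
  | generate s x => ∃ i t n, Paired F.pairs s t (M.tail n) ∧
      Paired F.pairs s (x * M.tail i * t * (M.tail i)⁻¹) (M.tail (n + 1))
  | expel s x => x ≠ 1 → ∃ z, z * x * z⁻¹ ∈ F.outside s
  | sameSide s v => v 2 ∈ F.inside s ∨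
      (∃ w w', Paired F.pairs s (FreeGroup.lift M.marks w) (FreeGroup.lift M.marks w') ∧
        FreeGroup.lift v w ∈ F.outside s) ∨
      ∃ c ∈ F.inside s, ∃ N, ∀ i, N ≤ i → tailLetter (v 0) (v 1) i = c * M.tail i * c⁻¹
  | otherSide s v => v 2 ∈ F.inside (!s) ∨
      ∃ w w', Paired F.pairs s (FreeGroup.lift M.marks w) (FreeGroup.lift M.marks w') ∧
        FreeGroup.lift v w ∈ F.outside (!s)
  | distinguish v v' =>
      (∀ i, tailLetter (v 0) (v 1) i ≠ tailLetter (v 0) (v 1) (i + 1)) →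
      ∃ w w', Paired F.pairs true (FreeGroup.lift M.marks w) (FreeGroup.lift M.marks w') ∧
        FreeGroup.lift v w ≠ FreeGroup.lift v' w'
  | consecutive s => ∃ i n, Paired F.pairs s (M.tail i) (M.tail n) ∧
      Paired F.pairs s (M.tail (i + 1)) (M.tail (n + 1))
  | twist s => ∃ i n, Paired F.pairs s (M.k * M.tail i) (M.tail n)
  | absorb p l x => (p :: l).IsChain (fun p q => p.1 ≠ q.1) →
      (∃ q ∈ p :: l, q.2 ∈ F.inside q.1) ∨
        ∀ (K : Type u) [Group K] (j : Bool → A →* K), Compatible F.pairs j →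
          j p.1 x ∈ Subgroup.normalClosure {wordProd j (p :: l)}

lemma Requirement.Met.mono {M : Marking A} {F F' : Facts A} (hF : F ≤ F') {r : Requirement A}
    (h : r.Met M F) : r.Met M F' := by
  obtain ⟨hpairs, hinside, houtside⟩ := hF
  cases r with
  | generate s x =>
    obtain ⟨i, t, n, h, h'⟩ := h
    exact ⟨i, t, n, h.mono hpairs, h'.mono hpairs⟩
  | expel s x =>
    intro hx
    obtain ⟨z, hz⟩ := h hx
    exact ⟨z, houtside s hz⟩
  | sameSide s v =>
    rcases h with h | ⟨w, w', h, h'⟩ | ⟨c, hc, h⟩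
    exacts [.inl (hinside s h), .inr (.inl ⟨w, w', h.mono hpairs, houtside s h'⟩),
      .inr (.inr ⟨c, hinside s hc, h⟩)]
  | otherSide s v =>
    rcases h with h | ⟨w, w', h, h'⟩
    exacts [.inl (hinside _ h), .inr ⟨w, w', h.mono hpairs, houtside _ h'⟩]
  | distinguish v v' =>
    intro hv
    obtain ⟨w, w', h, h'⟩ := h hv
    exact ⟨w, w', h.mono hpairs, h'⟩
  | consecutive s =>
    obtain ⟨i, n, h, h'⟩ := h
    exact ⟨i, n, h.mono hpairs, h'.mono hpairs⟩
  | twist s =>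
    obtain ⟨i, n, h⟩ := h
    exact ⟨i, n, h.mono hpairs⟩
  | absorb p l x =>
    intro hl
    rcases h hl with ⟨q, hq, hq'⟩ | h
    · exact .inl ⟨q, hq, hinside _ hq'⟩
    · exact .inr fun K _ j hj => h K j fun p hp => hj p (hpairs hp)

namespace Marking.State

variable {M : Marking A}

/-- The facts decided by a state. -/
def facts (σ : State M) : Facts A where
  pairs := σ.pairSet
  inside b := listClosure (σ.side b)
  outside b := {x | x ∈ σ.avoided b}

@[simp] lemma facts_pairs (σ : State M) : σ.facts.pairs = σ.pairSet := rfl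

lemma exists_met_generate (σ : State M) (s : Bool) (x : A) :
    ∃ τ, σ ≤ τ ∧ (Requirement.generate s x).Met M τ.facts := by
  obtain ⟨i, t, N, hN, h⟩ := (σ.isGood s).exists_append_conj_tail x
  obtain ⟨τ, hστ, -, -, -, hτ⟩ := σ.exists_extend_tail s _ h hN
  exact ⟨τ, hστ, i, t, _, hτ 0 (by simp), hτ 1 (by simp)⟩

lemma exists_met_expel (σ : State M) (s : Bool) (x : A) :
    ∃ τ, σ ≤ τ ∧ (Requirement.expel s x).Met M τ.facts := by
  rcases eq_or_ne x 1 with rfl | hx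
  · exact ⟨σ, le_rfl, fun h => absurd rfl h⟩
  obtain ⟨z, hz⟩ := (σ.isGood s).exists_conj_notMem_listClosure hx
  obtain ⟨τ, hστ, -, hτ⟩ := σ.exists_avoiding s [z * x * z⁻¹] (by simpa using hz)
  exact ⟨τ, hστ, fun _ => ⟨z, hτ (by simp)⟩⟩

lemma exists_met_sameSide (σ : State M) (s : Bool) (v : Fin 3 → A) :
    ∃ τ, σ ≤ τ ∧ (Requirement.sameSide s v).Met M τ.facts := by
  by_cases hv : v 2 ∈ listClosure (σ.side s)
  · exact ⟨σ, le_rfl, .inl hv⟩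
  rcases (σ.isGood s).exists_testWord_or_eq_conj hv with ⟨w, N, hN, h, hw⟩ | ⟨c, hc, h⟩
  · obtain ⟨τ, hστ, hside, -, -, hτ⟩ := σ.exists_extend_tail s _ h hN
    obtain ⟨ρ, hτρ, -, hρ⟩ := τ.exists_avoiding s [FreeGroup.lift v w] (by simpa [hside] using hw)
    refine ⟨ρ, hστ.trans hτρ, .inr (.inl ⟨w, testWord false (σ.bound !s), ?_, hρ (by simp)⟩)⟩
    simpa using (hτ 0 (by simp)).mono (pairSet_mono hτρ)
  · exact ⟨σ, le_rfl, .inr (.inr ⟨c, hc, _, h⟩)⟩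

lemma exists_met_otherSide (σ : State M) (s : Bool) (v : Fin 3 → A) :
    ∃ τ, σ ≤ τ ∧ (Requirement.otherSide s v).Met M τ.facts := by
  by_cases hv : v 2 ∈ listClosure (σ.side !s)
  · exact ⟨σ, le_rfl, .inl hv⟩
  obtain ⟨w, h, hw⟩ := (σ.isGood s).exists_testWord_notMem hv
  obtain ⟨N, hN, h'⟩ := (σ.isGood !s).exists_avoiding [FreeGroup.lift v w] (by simpa using hw)
  obtain ⟨τ, hστ, -, -, havoided, hτ⟩ := σ.exists_extend s
    [(FreeGroup.lift M.marks w, M.tail N)] h (h'.append_tail le_rfl) (by omega) (by omega)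
    (List.Subset.refl _) (List.subset_append_right _ _)
  exact ⟨τ, hστ, .inr ⟨w, testWord false N, by simpa using hτ, by simp [facts, havoided]⟩⟩

lemma exists_met_distinguish (σ : State M) (v v' : Fin 3 → A) :
    ∃ τ, σ ≤ τ ∧ (Requirement.distinguish v v').Met M τ.facts := by
  by_cases hv : ∀ i, tailLetter (v 0) (v 1) i ≠ tailLetter (v 0) (v 1) (i + 1)
  swap
  · exact ⟨σ, le_rfl, fun h => absurd h hv⟩
  obtain ⟨i, hi, hne⟩ : ∃ i, σ.bound true ≤ i ∧
      tailLetter (v 0) (v 1) i ≠ tailLetter (v' 0) (v' 1) (σ.bound false) := by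
    by_cases h : tailLetter (v 0) (v 1) (σ.bound true) = tailLetter (v' 0) (v' 1) (σ.bound false)
    · exact ⟨σ.bound true + 1, by omega, h ▸ (hv _).symm⟩
    · exact ⟨σ.bound true, le_rfl, h⟩
  obtain ⟨τ, hστ, -, -, -, hτ⟩ := σ.exists_extend_tail true _
    ((σ.isGood true).append_tail hi) (by omega)
  refine ⟨τ, hστ, fun _ => ⟨testWord false i, testWord false (σ.bound false), ?_, by simpa⟩⟩
  simpa using hτ 0 (by simp)

lemma exists_met_consecutive (σ : State M) (s : Bool) :
    ∃ τ, σ ≤ τ ∧ (Requirement.consecutive s).Met M τ.facts := by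
  obtain ⟨τ, hστ, -, -, -, hτ⟩ := σ.exists_extend_tail s _
    ((σ.isGood s).append_range_tail 2) (by omega)
  exact ⟨τ, hστ, σ.bound s, σ.bound !s, by simpa using hτ 0 (by simp),
    by simpa using hτ 1 (by simp)⟩

lemma exists_met_twist (σ : State M) (s : Bool) :
    ∃ τ, σ ≤ τ ∧ (Requirement.twist s).Met M τ.facts := by
  obtain ⟨τ, hστ, -, -, -, hτ⟩ := σ.exists_extend_tail s _
    ((σ.isGood s).append_twisted le_rfl true) (by omega)
  exact ⟨τ, hστ, σ.bound s, σ.bound !s, by simpa [twistedTail] using hτ 0 (by simp)⟩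

end Marking.State

lemma mem_of_conj_eq_mul {K : Type*} [Group K] {N : Subgroup K} [N.Normal]
    {w r t t' x g a b : K} (hw : w ∈ N) (hr : w * r * w⁻¹ = t * r) (ht' : t' = a⁻¹ * t * a)
    (hx : x * g * t' * g⁻¹ = b⁻¹ * t * b) : x ∈ N := by
  rw [← QuotientGroup.eq_one_iff] at hw ⊢
  have ht : (t : K ⧸ N) = 1 := by
    simpa [hw] using congr_arg ((↑) : K → K ⧸ N) hr
  have ht' : (t' : K ⧸ N) = 1 := by
    simpa [ht] using congr_arg ((↑) : K → K ⧸ N) ht'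
  simpa [ht, ht'] using congr_arg ((↑) : K → K ⧸ N) hx

namespace Marking.State

variable {A : Type u} [Group A] {M : Marking A}

lemma exists_inv_mem_avoided (σ : State M) (l : List (Σ _ : Bool, A))
    (hl : ∀ p ∈ l, p.2 ∉ listClosure (σ.side p.1)) :
    ∃ τ, σ ≤ τ ∧ τ.pairs = σ.pairs ∧ ∀ p ∈ l, p.2⁻¹ ∈ τ.avoided p.1 := by
  induction l with
  | nil => exact ⟨σ, le_rfl, rfl, by simp⟩
  | cons p l ih =>
    rw [List.forall_mem_cons] at hl
    obtain ⟨τ, hστ, hτ, hl'⟩ := ih hl.2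
    obtain ⟨ρ, hτρ, hρ, hp⟩ := τ.exists_avoiding p.1 [p.2⁻¹] (by simpa [side, hτ] using hl.1)
    exact ⟨ρ, hστ.trans hτρ, hρ.trans hτ, List.forall_mem_cons.2
      ⟨hp (by simp), fun q hq => (hτρ.2 q.1).2 (hl' q hq)⟩⟩

/-- Conjugating by the letters of the word one at a time, each conjugate being paired with a letter
on the opposite side, turns conjugation by the whole word into a free choice of a letter `d`. -/
lemma exists_conj_wordProd_eq (l : List (Σ _ : Bool, A)) (p : Σ _ : Bool, A)
    (hl : (p :: l).IsChain (fun p q => p.1 ≠ q.1)) (σ : State M)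
    (hσ : ∀ q ∈ p :: l, q.2⁻¹ ∈ σ.avoided q.1) :
    ∃ τ, σ ≤ τ ∧ ∃ d, M.IsGood (τ.side p.1 ++ [d]) (τ.bound p.1) (τ.avoided p.1) ∧
      ∃ r ∈ τ.pairs, ∀ (K : Type u) [Group K] (j : Bool → A →* K), Compatible τ.pairSet j →
        ∀ b, wordProd j (p :: l) * j b (r b) * (wordProd j (p :: l))⁻¹ = j p.1 d := by
  induction l generalizing p with
  | nil =>
    obtain ⟨t, ht⟩ := (σ.isGood p.1).exists_append_letter_conj (hσ p (by simp))
    rw [← List.singleton_append, ← List.append_assoc] at ht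
    obtain ⟨τ, hστ, hside, hbound, havoided, hτ⟩ :=
      σ.exists_extend_tail p.1 [t] ht.of_append_left le_rfl
    obtain ⟨r, hr, hrp, -⟩ := hτ 0 (by simp)
    refine ⟨τ, hστ, p.2 * t * p.2⁻¹, by rwa [hside, hbound, havoided], r, hr, fun K _ j hj b => ?_⟩
    rw [hj r hr b p.1, hrp]
    simp
  | cons p' l ih =>
    rw [List.isChain_cons_cons] at hl
    rw [List.forall_mem_cons] at hσ
    obtain ⟨τ, hστ, d, hd, r, hr, hconj⟩ := ih p' hl.2 hσ.2
    obtain ⟨t, ht⟩ := (τ.isGood p.1).exists_append_letter_conj ((hστ.2 _).2 hσ.1)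
    rw [← List.singleton_append, ← List.append_assoc] at ht
    have hp' : p'.1 = !p.1 := Bool.eq_not_of_ne hl.1.symm
    rw [hp'] at hd hconj
    obtain ⟨ρ, hτρ, hpairs, hbound, havoided, hρ⟩ := τ.exists_extend p.1 [(t, d)]
      ht.of_append_left hd le_rfl le_rfl (List.Subset.refl _) (List.Subset.refl _)
    have hside : ρ.side p.1 = τ.side p.1 ++ [t] := by simp [side, hpairs]
    refine ⟨ρ, hστ.trans hτρ, p.2 * t * p.2⁻¹, by rw [hside, hbound, havoided]; simpa using ht,
      r, hτρ.1.subset hr, fun K _ j hj b => ?_⟩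
    have htd := hj.apply_eq (hρ (t, d) (by simp))
    have hconj := hconj K j (fun q hq => hj q (pairSet_mono hτρ hq)) b
    rw [wordProd_cons, map_mul, map_mul, htd, ← hconj, map_inv]
    group

lemma exists_met_absorb (σ : State M) (p : Σ _ : Bool, A) (l : List (Σ _ : Bool, A)) (x : A) :
    ∃ τ, σ ≤ τ ∧ (Requirement.absorb p l x).Met M τ.facts := by
  by_cases hl : (p :: l).IsChain (fun p q => p.1 ≠ q.1)
  swap
  · exact ⟨σ, le_rfl, fun h => absurd h hl⟩
  by_cases hin : ∃ q ∈ p :: l, q.2 ∈ listClosure (σ.side q.1)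
  · exact ⟨σ, le_rfl, fun _ => .inl hin⟩
  push Not at hin
  obtain ⟨σ', hσσ', -, hσ'⟩ := σ.exists_inv_mem_avoided _ hin
  obtain ⟨τ, hσ'τ, d, hd, r, hr, hconj⟩ := exists_conj_wordProd_eq l p hl σ' hσ'
  obtain ⟨i, t', N, hN, h⟩ := hd.exists_append_conj_tail x
  obtain ⟨a, b, t, N', hN', h'⟩ :=
    (τ.isGood !p.1).exists_append_conjugates (apply_mem_listClosure hr _)
  obtain ⟨ρ, hτρ, -, -, -, hρ⟩ := τ.exists_extend p.1
    [(d, t * r !p.1), (t', a⁻¹ * t * a), (x * M.tail i * t' * (M.tail i)⁻¹, b⁻¹ * t * b)]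
    (by simpa using h) h' hN hN' (List.Subset.refl _) (List.Subset.refl _)
  refine ⟨ρ, hσσ'.trans (hσ'τ.trans hτρ), fun _ => .inr fun K _ j hj => ?_⟩
  simp only [List.forall_mem_cons] at hρ
  have hd := hj.apply_eq hρ.1
  have ht' := hj.apply_eq hρ.2.1
  have hx := hj.apply_eq hρ.2.2.1
  have hconj := hconj K j (fun q hq => hj q (pairSet_mono hτρ hq)) !p.1
  simp only [map_mul, map_inv] at hd ht' hx
  exact mem_of_conj_eq_mul (Subgroup.subset_normalClosure rfl) (hconj.trans hd) ht' hx

lemma exists_met (σ : State M) (r : Requirement A) : ∃ τ, σ ≤ τ ∧ r.Met M τ.facts := by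
  cases r with
  | generate s x => exact σ.exists_met_generate s x
  | expel s x => exact σ.exists_met_expel s x
  | sameSide s v => exact σ.exists_met_sameSide s v
  | otherSide s v => exact σ.exists_met_otherSide s v
  | distinguish v v' => exact σ.exists_met_distinguish v v'
  | consecutive s => exact σ.exists_met_consecutive s
  | twist s => exact σ.exists_met_twist s
  | absorb p l x => exact σ.exists_met_absorb p l x

lemma exists_le_length (σ : State M) (n : ℕ) : ∃ τ, σ ≤ τ ∧ n ≤ τ.pairs.length := by
  obtain ⟨τ, hστ, hside, -⟩ := σ.exists_extend_tail true _ ((σ.isGood true).append_range_tail n)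
    (by omega)
  refine ⟨τ, hστ, ?_⟩
  simpa using (congr_arg List.length hside).ge.trans' (by simp)

end Marking.State

/-! ### The generic pairing -/

section Generic

variable {A : Type u} [Group A] {M : Marking A} {c : ℕ → Bool → A}

/-- The homomorphism from the free group of countable rank given by one side of a sequence of
pairs. -/
def basisHom (c : ℕ → Bool → A) (b : Bool) : FreeGroup ℕ →* A := FreeGroup.lift (c · b)

@[simp] lemma basisHom_of (c : ℕ → Bool → A) (b : Bool) (k : ℕ) :
    basisHom c b (FreeGroup.of k) = c k b :=
  FreeGroup.lift_apply_of

/-- The facts decided by a complete sequence of pairs. -/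
def limitFacts (c : ℕ → Bool → A) : Facts A where
  pairs := Set.range c
  inside b := (basisHom c b).range
  outside b := {x | x ∉ (basisHom c b).range}

/-- A sequence of pairs is generic if each side is a basis of a free subgroup no nontrivial element
of which is conjugate into the core of the marking, and all requirements are met. -/
structure IsGeneric (M : Marking A) (c : ℕ → Bool → A) : Prop where
  injective (b : Bool) : Injective (basisHom c b)
  eq_one_of_conj_mem_range (b : Bool) (z : A) :
    ∀ g ∈ M.core, z * g * z⁻¹ ∈ (basisHom c b).range → g = 1
  met (r : Requirement A) : r.Met M (limitFacts c)

/-- The sequence of pairs `c` is the union of the lists of pairs of the states in `𝓕`. -/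
structure IsLimit (𝓕 : Order.Ideal M.State) (c : ℕ → Bool → A) : Prop where
  exists_length_le (n : ℕ) : ∃ σ ∈ 𝓕, n ≤ σ.pairs.length
  getElem_eq : ∀ σ ∈ 𝓕, ∀ k (hk : k < σ.pairs.length), σ.pairs[k] = c k

lemma exists_isLimit {𝓕 : Order.Ideal M.State} (hlen : ∀ n, ∃ σ ∈ 𝓕, n ≤ σ.pairs.length) :
    ∃ c, IsLimit 𝓕 c := by
  choose σ hσ hlength using hlen
  refine ⟨fun k => (σ (k + 1)).pairs[k]'(hlength _),
    fun n => ⟨σ n, hσ n, hlength n⟩, fun τ hτ k hk => ?_⟩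
  obtain ⟨ρ, -, hτρ, hσρ⟩ := 𝓕.directed τ hτ _ (hσ (k + 1))
  rw [hτρ.1.getElem, hσρ.1.getElem]

namespace IsLimit

variable {𝓕 : Order.Ideal M.State} {σ : M.State}

lemma exists_lift_gen_eq_basisHom (h : IsLimit 𝓕 c) (hσ : σ ∈ 𝓕) (b : Bool) (w : FreeGroup ℕ) :
    ∃ τ ∈ 𝓕, σ ≤ τ ∧
      FreeGroup.map Sum.inl w ∈ wordsIn (Marking.indexSet (τ.side b).length (τ.bound b)) ∧
      FreeGroup.lift (M.gen (τ.side b) fun _ => false) (FreeGroup.map Sum.inl w) =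
        basisHom c b w := by
  obtain ⟨T, hT, hw⟩ := exists_finite_mem_wordsIn (I := Set.univ) (w := w) (by simp [wordsIn])
  obtain ⟨n, hn⟩ := hT.bddAbove
  obtain ⟨τ', hτ', hlength⟩ := h.exists_length_le (n + 1)
  obtain ⟨τ, hτ, hστ, hτ'τ⟩ := 𝓕.directed σ hσ τ' hτ'
  have lt_length (k) (hk : k ∈ Set.univ ∩ T) : k < τ.pairs.length :=
    (Nat.lt_succ_of_le (hn hk.2)).trans_le (hlength.trans hτ'τ.1.length_le)
  refine ⟨τ, hτ, hστ, map_mem_of_mem_wordsIn _ (fun k hk => ?_) hw, ?_⟩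
  · rw [FreeGroup.map.of]
    exact of_mem_wordsIn (by simpa using lt_length k hk)
  · rw [lift_map_apply]
    refine eqOn_wordsIn (fun k hk => ?_) hw
    simp [lt_length k hk, h.getElem_eq τ hτ k (lt_length k hk)]

lemma listClosure_le_range (h : IsLimit 𝓕 c) (hσ : σ ∈ 𝓕) (b : Bool) :
    listClosure (σ.side b) ≤ (basisHom c b).range := by
  refine (Subgroup.closure_le _).2 fun x hx => ?_
  obtain ⟨p, hp, rfl⟩ := List.mem_map.1 hx
  obtain ⟨k, hk, rfl⟩ := List.getElem_of_mem hp
  exact ⟨FreeGroup.of k, by rw [basisHom_of, h.getElem_eq σ hσ]⟩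

lemma injective (h : IsLimit 𝓕 c) (b : Bool) : Injective (basisHom c b) := by
  refine (injective_iff_map_eq_one _).2 fun w hw => ?_
  obtain ⟨σ, hσ, -⟩ := h.exists_length_le 0
  obtain ⟨τ, -, -, hmem, heq⟩ := h.exists_lift_gen_eq_basisHom hσ b w
  exact FreeGroup.map_injective Sum.inl_injective
    (((τ.isGood b).free _ _ hmem (heq.trans hw)).trans (map_one _).symm)

lemma exists_mem_span (h : IsLimit 𝓕 c) (hσ : σ ∈ 𝓕) (b : Bool) {x : A}
    (hx : x ∈ (basisHom c b).range) :
    ∃ τ ∈ 𝓕, σ ≤ τ ∧ x ∈ M.span (τ.side b) (τ.bound b) fun _ => false := by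
  obtain ⟨w, rfl⟩ := hx
  obtain ⟨τ, hτ, hστ, hmem, heq⟩ := h.exists_lift_gen_eq_basisHom hσ b w
  exact ⟨τ, hτ, hστ, _, hmem, heq⟩

lemma facts_le (h : IsLimit 𝓕 c) (hσ : σ ∈ 𝓕) : σ.facts ≤ limitFacts c := by
  refine ⟨fun p hp => ?_, fun b => h.listClosure_le_range hσ b, fun b x hx hxc => ?_⟩
  · obtain ⟨k, hk, rfl⟩ := List.getElem_of_mem hp
    exact ⟨k, (h.getElem_eq σ hσ k hk).symm⟩
  · obtain ⟨τ, -, hστ, hmem⟩ := h.exists_mem_span hσ b hxc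
    exact (τ.isGood b).avoid _ x ((hστ.2 b).2 hx) hmem

lemma isGeneric (h : IsLimit 𝓕 c) (hmet : ∀ r : Requirement A, ∃ σ ∈ 𝓕, r.Met M σ.facts) :
    IsGeneric M c where
  injective := h.injective
  eq_one_of_conj_mem_range b z g hg hgz := by
    obtain ⟨σ, hσ, -⟩ := h.exists_length_le 0
    obtain ⟨τ, -, -, hmem⟩ := h.exists_mem_span hσ b hgz
    exact (τ.isGood b).conj _ z g hg hmem
  met r :=
    let ⟨_, hσ, hr⟩ := hmet r
    hr.mono (h.facts_le hσ)

end IsLimit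

theorem exists_isGeneric [Countable A] (M : Marking A) : ∃ c, IsGeneric M c := by
  have := Encodable.ofCountable (ℕ ⊕ Requirement A)
  let 𝒟 : ℕ ⊕ Requirement A → Order.Cofinal M.State := Sum.elim
    (fun n => ⟨{σ | n ≤ σ.pairs.length}, fun σ =>
      let ⟨τ, hστ, hτ⟩ := σ.exists_le_length n; ⟨τ, hτ, hστ⟩⟩)
    (fun r => ⟨{σ | r.Met M σ.facts}, fun σ =>
      let ⟨τ, hστ, hτ⟩ := σ.exists_met r; ⟨τ, hτ, hστ⟩⟩)
  obtain ⟨c, hc⟩ := exists_isLimit (𝓕 := Order.idealOfCofinals default 𝒟) fun n =>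
    let ⟨σ, hσ, hσ'⟩ := Order.cofinal_meets_idealOfCofinals default 𝒟 (.inl n); ⟨σ, hσ', hσ⟩
  exact ⟨c, hc.isGeneric fun r =>
    let ⟨σ, hσ, hσ'⟩ := Order.cofinal_meets_idealOfCofinals default 𝒟 (.inr r); ⟨σ, hσ', hσ⟩⟩

end Generic

/-! ### The factor -/

section Block

/-- The group whose copies are used as free factors: a free group, to provide free tails, times a
dihedral group, to provide an element of order three that is normalised but not centralised. -/
abbrev Block : Type := FreeGroup Bool × DihedralGroup 3

/-- The element of the block whose powers conjugate the tail letters into one another. -/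
def blockX : Block := (FreeGroup.of false, .r 1)

/-- The element of the block whose conjugates are the tail letters. -/
def blockY : Block := (FreeGroup.of true, .sr 0)

/-- The element of order three of the block. -/
def blockK : Block := (1, .r 1)

lemma map_tailLetter {A B : Type*} [Group A] [Group B] (f : A →* B) (x y : A) (i : ℕ) :
    f (tailLetter x y i) = tailLetter (f x) (f y) i := by
  simp [tailLetter]

lemma map_twistedTail {A B : Type*} [Group A] [Group B] (f : A →* B) (x y k : A) (ε : ℕ → Bool)
    (i : ℕ) : f (twistedTail x y k ε i) = twistedTail (f x) (f y) (f k) ε i := by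
  simp only [twistedTail, apply_ite f, map_mul, map_tailLetter]

lemma FixesUpToInv.map {A B : Type*} [Group A] [Group B] {x k : A} (h : FixesUpToInv x k)
    (f : A →* B) : FixesUpToInv (f x) (f k) :=
  h.imp (fun h => by simpa using congrArg f h) fun h => by simpa using congrArg f h

lemma FixesUpToInv.commute_sq {A : Type*} [Group A] {x k : A} (h : FixesUpToInv x k) :
    Commute k (x ^ 2) := by
  have hsq : MulAut.conj x (MulAut.conj x k) = k := by
    rcases h with h | h
    · rw [MulAut.conj_apply x k, h, MulAut.conj_apply, h]
    · rw [MulAut.conj_apply x k, h, map_inv, MulAut.conj_apply, h, inv_inv]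
  rw [← MulAut.mul_apply, ← map_mul, ← pow_two, MulAut.conj_apply] at hsq
  exact (mul_inv_eq_iff_eq_mul.1 hsq).symm

lemma eq_one_of_commute_block {z : Block} (h : Commute z blockY)
    (h' : Commute z (blockX * blockY * blockX⁻¹)) : z = 1 := by
  have dihedral : ∀ v : DihedralGroup 3, v * .sr 0 = .sr 0 * v →
      v * (.r 1 * .sr 0 * (.r 1)⁻¹) = .r 1 * .sr 0 * (.r 1)⁻¹ * v → v = 1 := by decide
  exact Prod.ext
    (eq_one_of_commute_of_of_conj (congrArg Prod.fst h.eq).symm (congrArg Prod.fst h'.eq).symm)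
    (dihedral _ (congrArg Prod.snd h.eq) (congrArg Prod.snd h'.eq))

lemma eq_one_of_commute_tailLetter_block {z : Block} (i : ℕ)
    (h : Commute z (tailLetter blockX blockY i))
    (h' : Commute z (tailLetter blockX blockY (i + 1))) : z = 1 := by
  obtain ⟨v, rfl⟩ : ∃ v, blockX ^ i * v * (blockX ^ i)⁻¹ = z :=
    ⟨(blockX ^ i)⁻¹ * z * blockX ^ i, by simp [mul_assoc]⟩
  have shift : tailLetter blockX blockY (i + 1) =
      blockX ^ i * (blockX * blockY * blockX⁻¹) * (blockX ^ i)⁻¹ := by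
    simp [tailLetter, pow_succ, mul_assoc]
  rw [shift, Commute.conj_iff] at h'
  rw [eq_one_of_commute_block ((Commute.conj_iff _).1 h) h', mul_one, mul_inv_cancel]

lemma commute_blockK {z : Block} (h : z ^ 3 = 1) : Commute z blockK := by
  have dihedral : ∀ d : DihedralGroup 3, d ^ 3 = 1 → d * .r 1 = .r 1 * d := by decide
  exact Prod.ext (by simp [blockK]) (dihedral _ (congrArg Prod.snd h))

lemma fixesUpToInv_blockX : FixesUpToInv blockX blockK :=
  .inl <| Prod.ext (by simp [blockX, blockK]) (by decide)

lemma fixesUpToInv_blockY : FixesUpToInv blockY blockK :=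
  .inr <| Prod.ext (by simp [blockY, blockK]) (by decide)

lemma blockK_pow_three : blockK ^ 3 = 1 := Prod.ext (one_pow 3) (by decide)

lemma blockK_ne_one : blockK ≠ 1 := fun h => absurd (congrArg Prod.snd h) (by decide)

end Block

section BlockProduct

/-- The free factors of `BlockProduct G`. -/
def BlockFactor (G : Type u) : Option ℕ → Type u
  | none => G
  | some _ => ULift.{u} Block

instance (G : Type u) [Group G] : ∀ i, Group (BlockFactor G i)
  | none => inferInstanceAs (Group G)
  | some _ => inferInstanceAs (Group (ULift Block))

instance (G : Type u) [Countable G] : ∀ i, Countable (BlockFactor G i)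
  | none => inferInstanceAs (Countable G)
  | some _ => inferInstanceAs (Countable (ULift Block))

/-- The free product of `G` with countably many copies of the block, as an amalgamated product over
the trivial group. -/
abbrev BlockProduct (G : Type u) [Group G] : Type u :=
  PushoutI (fun i : Option ℕ => (1 : Unit →* BlockFactor G i))

namespace BlockProduct

lemma injective_trivial {ι : Type*} {G : ι → Type*} [∀ i, Group (G i)] (i : ι) :
    Injective (1 : Unit →* G i) :=
  injective_of_subsingleton _

lemma mem_range_of_of_conj_mem {ι : Type*} {G : ι → Type*} [∀ i, Group (G i)] {i : ι} {a : G i}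
    (ha : a ≠ 1) {z : PushoutI fun i => (1 : Unit →* G i)}
    (h : z⁻¹ * PushoutI.of i a * z ∈ (PushoutI.of (φ := fun i => (1 : Unit →* G i)) i).range) :
    z ∈ (PushoutI.of (φ := fun i => (1 : Unit →* G i)) i).range := by
  refine (conj_of_mem_range_of injective_trivial (fun w hw => ha ?_) h).2
  obtain ⟨u, hu⟩ := hw
  simpa [mul_assoc] using congrArg (w * · * w⁻¹) hu.symm

variable (G : Type u) [Group G]

instance [Countable G] : Countable (BlockProduct G) :=
  Surjective.countable fun h => exists_amalgamProd_eq h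

/-- The embedding of `G` into its block product. -/
def inl : G →* BlockProduct G :=
  PushoutI.of (φ := fun i : Option ℕ => (1 : Unit →* BlockFactor G i)) none

/-- The embedding of the `n`-th copy of the block. -/
def inr (n : ℕ) : Block →* BlockProduct G :=
  (PushoutI.of (some n)).comp (MulEquiv.ulift.symm : Block ≃* ULift.{u} Block).toMonoidHom

lemma inl_injective : Injective (inl G) :=
  PushoutI.of_injective (G := BlockFactor G) injective_trivial none

lemma inr_injective (n : ℕ) : Injective (inr G n) :=
  (PushoutI.of_injective injective_trivial (some n)).comp (MulEquiv.injective _)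

lemma exists_lift {X : Type*} [Group X] (f : G →* X) (p : ℕ → Block →* X) :
    ∃ Λ : BlockProduct G →* X, (∀ g, Λ (inl G g) = f g) ∧ ∀ n w, Λ (inr G n w) = p n w := by
  let F : ∀ i, BlockFactor G i →* X
    | none => f
    | some n => (p n).comp MulEquiv.ulift.toMonoidHom
  have hF (i) : (F i).comp (1 : Unit →* BlockFactor G i) = 1 := by ext; simp
  exact ⟨PushoutI.lift F 1 hF, fun g => PushoutI.lift_of (G := BlockFactor G) _ _ hF (i := none) g,
    fun n w => PushoutI.lift_of _ _ hF (i := some n) ⟨w⟩⟩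

/-- The subgroup generated by `G` and the first `m + 1` copies of the block. -/
def stage (m : ℕ) : Subgroup (BlockProduct G) :=
  (inl G).range ⊔ ⨆ n ≤ m, (inr G n).range

variable {G}

lemma inl_mem_stage (m : ℕ) (g : G) : inl G g ∈ stage G m :=
  Subgroup.mem_sup_left ⟨g, rfl⟩

lemma inr_mem_stage {m n : ℕ} (h : n ≤ m) (w : Block) : inr G n w ∈ stage G m :=
  Subgroup.mem_sup_right (le_iSup₂ (f := fun n (_ : n ≤ m) => (inr G n).range) n h ⟨w, rfl⟩)

lemma stage_le {m : ℕ} {K : Subgroup (BlockProduct G)} (hl : ∀ g, inl G g ∈ K)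
    (hr : ∀ n ≤ m, ∀ w, inr G n w ∈ K) : stage G m ≤ K :=
  sup_le (by rintro _ ⟨g, rfl⟩; exact hl g)
    (iSup₂_le fun n hn => by rintro _ ⟨w, rfl⟩; exact hr n hn w)

variable (G) in
lemma stage_mono : Monotone (stage G) := fun _ _ h =>
  stage_le (inl_mem_stage _) fun _ hn => inr_mem_stage (hn.trans h)

lemma exists_mem_stage (a : BlockProduct G) : ∃ m, a ∈ stage G m := by
  induction a using PushoutI.induction_on with
  | of i g =>
    rcases i with _ | n
    · exact ⟨0, inl_mem_stage (G := G) 0 g⟩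
    · exact ⟨n, inr_mem_stage le_rfl (ULift.down g)⟩
  | base h => exact ⟨0, by rw [Subsingleton.elim h 1, map_one]; exact one_mem _⟩
  | mul a b ha hb =>
    obtain ⟨m, hm⟩ := ha
    obtain ⟨n, hn⟩ := hb
    exact ⟨max m n, mul_mem (stage_mono G (le_max_left _ _) hm)
      (stage_mono G (le_max_right _ _) hn)⟩

lemma extendsFreely_stage (m : ℕ) :
    ExtendsFreely (stage G m) (inr G (m + 1) (FreeGroup.of false, 1)) := by
  intro X _ f τ
  obtain ⟨Λ, hl, hr⟩ := exists_lift G (f.comp ((inl G).codRestrict _ (inl_mem_stage m)))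
    (fun n => if h : n ≤ m then f.comp ((inr G n).codRestrict _ (inr_mem_stage h))
      else (FreeGroup.lift fun _ => τ).comp (MonoidHom.fst _ _))
  have agree : stage G m ≤ ((Λ.comp (stage G m).subtype).eqLocus f).map (stage G m).subtype :=
    stage_le (fun g => ⟨⟨_, inl_mem_stage m g⟩, hl g, rfl⟩)
      fun n hn w => ⟨⟨_, inr_mem_stage hn w⟩, (hr n w).trans (by rw [dif_pos hn]; rfl), rfl⟩
  refine ⟨Λ, fun b => ?_, by simp [hr]⟩
  obtain ⟨b', hb', hbb'⟩ := agree b.2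
  rwa [Subtype.ext hbb'] at hb'

lemma exists_inr_eq_of_commute {n : ℕ} {w : Block} (hw : w ≠ 1) {z : BlockProduct G}
    (h : Commute z (inr G n w)) : ∃ v, inr G n v = z := by
  obtain ⟨v, hv⟩ := mem_range_of_of_conj_mem (G := BlockFactor G) (i := some n) (a := ⟨w⟩)
    (z := z) (fun h => hw (congrArg ULift.down h))
    ⟨⟨w⟩, (by rw [mul_assoc, ← h.eq, inv_mul_cancel_left] : inr G n w = z⁻¹ * inr G n w * z)⟩
  exact ⟨v.down, hv⟩

lemma eq_one_of_inl_conj_mem_range {h : BlockProduct G} (hh : h ∉ (inl G).range) {g : G}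
    (hg : h * inl G g * h⁻¹ ∈ (inl G).range) : inl G g = 1 := by
  by_contra hne
  refine hh (inv_mem_iff.1 ?_)
  exact mem_range_of_of_conj_mem (G := BlockFactor G) (i := none) (a := g)
    (fun h => hne (by rw [show g = 1 from h, map_one])) (by rw [inv_inv]; exact hg)

lemma tailLetter_block_ne_one (i : ℕ) : tailLetter blockX blockY i ≠ 1 := by
  simp [tailLetter, Prod.ext_iff, blockY]

lemma eq_one_of_commute_tailLetter {i : ℕ} {z : BlockProduct G}
    (h : Commute z (tailLetter (inr G 0 blockX) (inr G 0 blockY) i))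
    (h' : Commute z (tailLetter (inr G 0 blockX) (inr G 0 blockY) (i + 1))) : z = 1 := by
  rw [← map_tailLetter] at h h'
  obtain ⟨v, rfl⟩ := exists_inr_eq_of_commute (tailLetter_block_ne_one i) h
  rw [eq_one_of_commute_tailLetter_block i (h.of_map (inr_injective G 0))
    (h'.of_map (inr_injective G 0)), map_one]

lemma commute_inr_blockK {z : BlockProduct G} (hz : z ^ 3 = 1)
    (hx : FixesUpToInv (inr G 0 blockX) z) : Commute z (inr G 0 blockK) := by
  obtain ⟨v, rfl⟩ := exists_inr_eq_of_commute (w := blockX ^ 2)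
    (by simp [Prod.ext_iff, blockX]) (by simpa using hx.commute_sq)
  exact (commute_blockK (inr_injective G 0 (by rw [map_pow, hz, map_one]))).map _

variable (G) in
lemma exists_retraction : ∃ π : BlockProduct G →* FreeGroup Bool, (∀ g, π (inl G g) = 1) ∧
    ∀ ε, Injective (π.comp (FreeGroup.lift
      (twistedTail (inr G 0 blockX) (inr G 0 blockY) (inr G 0 blockK) ε))) := by
  obtain ⟨π, hl, hr⟩ := exists_lift G 1 fun _ => MonoidHom.fst (FreeGroup Bool) (DihedralGroup 3)
  refine ⟨π, hl, fun ε => ?_⟩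
  convert lift_conj_injective
  ext i
  simp only [MonoidHom.comp_apply, FreeGroup.lift_apply_of, map_twistedTail, hr]
  by_cases hi : ε i <;> simp [twistedTail, tailLetter, hi, blockX, blockY, blockK]

variable (G) in
/-- The marking of the block product by the elements of its initial block, with core `G`. -/
def marking : Marking (BlockProduct G) where
  x := inr G 0 blockX
  y := inr G 0 blockY
  k := inr G 0 blockK
  core := (inl G).range
  stage := stage G
  letter m := inr G (m + 1) (FreeGroup.of false, 1)
  stage_mono := stage_mono G
  exists_mem_stage := exists_mem_stage
  x_mem := inr_mem_stage le_rfl _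
  y_mem := inr_mem_stage le_rfl _
  k_mem := inr_mem_stage le_rfl _
  core_le := le_sup_left
  extendsFreely := extendsFreely_stage
  k_pow_three := by rw [← map_pow, blockK_pow_three, map_one]
  k_ne_one := (map_ne_one_iff _ (inr_injective G 0)).2 blockK_ne_one
  fixes_x := fixesUpToInv_blockX.map _
  fixes_y := fixesUpToInv_blockY.map _
  lift_injective ε := by
    obtain ⟨π, -, hπ⟩ := exists_retraction G
    exact Injective.of_comp (f := π) (hπ ε)
  eq_one_of_conj_mem_range := by
    rintro ε z _ ⟨g, rfl⟩ ⟨w, hw⟩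
    obtain ⟨π, hl, hπ⟩ := exists_retraction G
    have hw1 : w = 1 := (injective_iff_map_eq_one _).1 (hπ ε) w (by simp [hw, hl])
    exact conj_eq_one_iff.1 (by rw [← hw, hw1, map_one])
  eq_one_of_commute _ _ := eq_one_of_commute_tailLetter
  commute_k _ hz hx _ := commute_inr_blockK hz hx
  malnormal := by
    rintro h hh _ ⟨g, rfl⟩ hg
    exact eq_one_of_inl_conj_mem_range hh hg

end BlockProduct

end BlockProduct

/-! ### The amalgam of two copies along a generic pairing -/

section Amalgam

variable {A : Type u} [Group A] {M : Marking A} {c : ℕ → Bool → A}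

/-- The amalgamated product of two copies of `A` along the identification of `c n true` in the first
with `c n false` in the second. -/
abbrev Amalgam (c : ℕ → Bool → A) : Type u :=
  PushoutI (G := fun _ : Bool => A) (basisHom c)

/-- The two inclusions of `A` into the amalgam. -/
def factor (c : ℕ → Bool → A) (s : Bool) : A →* Amalgam c :=
  PushoutI.of (G := fun _ : Bool => A) (φ := basisHom c) s

lemma factor_basisHom (s : Bool) (w : FreeGroup ℕ) :
    factor c s (basisHom c s w) = PushoutI.base (basisHom c) w :=
  PushoutI.of_apply_eq_base (G := fun _ : Bool => A) (basisHom c) s w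

lemma compatible_factor (c : ℕ → Bool → A) : Compatible (Set.range c) (factor c) := by
  rintro _ ⟨n, rfl⟩ b b'
  rw [← basisHom_of c b, ← basisHom_of c b', factor_basisHom, factor_basisHom]

lemma factor_eq_factor_not {s : Bool} {a b : A} (h : Paired (Set.range c) s a b) :
    factor c s a = factor c (!s) b :=
  (compatible_factor c).apply_eq h

lemma mem_range_basisHom_of_paired {s : Bool} {a b : A} (h : Paired (Set.range c) s a b) :
    a ∈ (basisHom c s).range := by
  obtain ⟨_, ⟨n, rfl⟩, rfl, -⟩ := h
  exact ⟨.of n, basisHom_of c s n⟩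

lemma eq_top_of_factor_mem {K : Subgroup (Amalgam c)} (h : ∀ s x, factor c s x ∈ K) : K = ⊤ := by
  refine (Subgroup.eq_top_iff' K).2 fun z => ?_
  induction z using PushoutI.induction_on with
  | of s x => exact h s x
  | base w => exact factor_basisHom (c := c) true w ▸ h true _
  | mul x y hx hy => exact mul_mem hx hy

lemma Marking.tail_injective (M : Marking A) : Injective M.tail :=
  fun i j h => FreeGroup.of_injective <| M.lift_injective (fun _ => false) <| by
    simpa [twistedTail] using h

namespace IsGeneric

lemma factor_injective (hc : IsGeneric M c) (s : Bool) : Injective (factor c s) :=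
  PushoutI.of_injective hc.injective s

lemma eq_one_of_pow_eq_one (hc : IsGeneric M c) {s : Bool} {a : A} (ha : a ∈ (basisHom c s).range)
    {n : ℕ} (hn : n ≠ 0) (h : a ^ n = 1) : a = 1 := by
  obtain ⟨w, rfl⟩ := ha
  rw [← map_pow, map_eq_one_iff _ (hc.injective s), pow_eq_one_iff_left hn] at h
  rw [h, map_one]

lemma factor_mem_of_conj_tail_mem (hc : IsGeneric M c) {K : Subgroup (Amalgam c)} {s : Bool}
    (htail : ∀ i, factor c (!s) (M.tail i) ∈ K)
    (hconj : ∀ i t, factor c s t ∈ K → factor c s (M.tail i * t * (M.tail i)⁻¹) ∈ K) (x : A) :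
    factor c s x ∈ K := by
  obtain ⟨i, t, n, ht, hxt⟩ := hc.met (.generate s x)
  have mem_t : factor c s t ∈ K := factor_eq_factor_not ht ▸ htail n
  have mem_xt : factor c s (x * M.tail i * t * (M.tail i)⁻¹) ∈ K :=
    factor_eq_factor_not hxt ▸ htail (n + 1)
  have quotient : x = x * M.tail i * t * (M.tail i)⁻¹ * (M.tail i * t * (M.tail i)⁻¹)⁻¹ := by
    group
  rw [quotient, map_mul, map_inv]
  exact mul_mem mem_xt (inv_mem (hconj i t mem_t))

lemma closure_factor_eq_top (hc : IsGeneric M c) :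
    Subgroup.closure ({factor c true M.x, factor c true M.y, factor c false M.x,
      factor c false M.y} : Set (Amalgam c)) = ⊤ := by
  set K := Subgroup.closure ({factor c true M.x, factor c true M.y, factor c false M.x,
    factor c false M.y} : Set (Amalgam c))
  have mem_x (s : Bool) : factor c s M.x ∈ K := Subgroup.subset_closure (by cases s <;> simp)
  have mem_y (s : Bool) : factor c s M.y ∈ K := Subgroup.subset_closure (by cases s <;> simp)
  have mem_tail (s : Bool) (i : ℕ) : factor c s (M.tail i) ∈ K := by
    rw [map_tailLetter]
    exact mul_mem (mul_mem (pow_mem (mem_x s) i) (mem_y s)) (inv_mem (pow_mem (mem_x s) i))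
  refine eq_top_of_factor_mem fun s => hc.factor_mem_of_conj_tail_mem (mem_tail _) fun i t ht => ?_
  rw [map_mul, map_mul, map_inv]
  exact mul_mem (mul_mem (mem_tail s i) ht) (inv_mem (mem_tail s i))

lemma exists_isReduced_mem (hc : IsGeneric M c) {N : Subgroup (Amalgam c)} [hN : N.Normal]
    (h : N ≠ ⊥) :
    ∃ l ≠ [], IsReduced (G := fun _ : Bool => A) (basisHom c) l ∧
      amalgamProd (G := fun _ : Bool => A) (basisHom c) l ∈ N := by
  obtain ⟨z, hz, hz1⟩ := N.bot_or_exists_ne_one.resolve_left h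
  rcases mem_range_base_or_exists_isReduced hc.injective z with
    ⟨w, hw⟩ | ⟨l, hne, hl, hlz⟩
  · rw [← factor_basisHom true] at hw
    obtain ⟨v, hv⟩ := hc.met (.expel true (basisHom c true w)) fun h1 =>
      hz1 (by rw [← hw, h1, map_one])
    refine ⟨[⟨true, v * basisHom c true w * v⁻¹⟩], by simp, isReduced_singleton.2 hv, ?_⟩
    rw [amalgamProd, wordProd_cons, wordProd_nil, mul_one]
    change factor c true _ ∈ N
    rw [map_mul, map_mul, map_inv, hw]
    exact hN.conj_mem _ hz _
  · exact ⟨l, hne, hl, hlz ▸ hz⟩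

lemma eq_top_of_normal_of_ne_bot (hc : IsGeneric M c) {N : Subgroup (Amalgam c)} [hN : N.Normal]
    (h : N ≠ ⊥) : N = ⊤ := by
  obtain ⟨_ | ⟨⟨s, a⟩, l⟩, hne, hl, hlN⟩ := hc.exists_isReduced_mem h
  · exact absurd rfl hne
  have mem_s (x : A) : factor c s x ∈ N := by
    rcases hc.met (.absorb ⟨s, a⟩ l x) hl.1 with ⟨q, hq, hq'⟩ | hx
    · exact absurd hq' (hl.2 q hq)
    · exact Subgroup.normalClosure_le_normal (Set.singleton_subset_iff.2 hlN)
        (hx (Amalgam c) (factor c) (compatible_factor c))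
  have mem_not (x : A) : factor c (!s) x ∈ N :=
    hc.factor_mem_of_conj_tail_mem (fun i => (Bool.not_not s).symm ▸ mem_s _)
      (fun i t ht => by rw [map_mul, map_mul, map_inv]; exact hN.conj_mem _ ht _) x
  refine eq_top_of_factor_mem fun s' x => ?_
  rcases Bool.eq_or_eq_not s' s with rfl | rfl
  exacts [mem_s x, mem_not x]

theorem isSimpleGroup (hc : IsGeneric M c) : IsSimpleGroup (Amalgam c) where
  exists_pair_ne := ⟨factor c true M.k, 1, fun h =>
    M.k_ne_one (hc.factor_injective true (h.trans (map_one _).symm))⟩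
  eq_bot_or_eq_top_of_normal _ _ := or_iff_not_imp_left.2 hc.eq_top_of_normal_of_ne_bot

theorem center_eq_bot (hc : IsGeneric M c) : Subgroup.center (Amalgam c) = ⊥ := by
  by_contra h
  have mem : factor c true M.y ∈ Subgroup.center (Amalgam c) :=
    hc.eq_top_of_normal_of_ne_bot h ▸ Subgroup.mem_top _
  have hxy := Subgroup.mem_center_iff.1 mem (factor c true M.x)
  rw [← map_mul, ← map_mul] at hxy
  refine M.tail_injective.ne zero_ne_one ?_
  simp [tailLetter, hc.factor_injective true hxy]

theorem malnormal (hc : IsGeneric M c) {h : Amalgam c} (hh : h ∉ M.core.map (factor c true))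
    {g : Amalgam c} (hg : g ∈ M.core.map (factor c true))
    (hgh : h * g * h⁻¹ ∈ M.core.map (factor c true)) : g = 1 := by
  obtain ⟨a, ha, rfl⟩ := hg
  obtain ⟨b, hb, hab⟩ := hgh
  by_contra hne
  have ha1 : a ≠ 1 := fun h => hne (by rw [h, map_one])
  obtain ⟨v, hv⟩ := (conj_of_mem_range_of hc.injective (i := true) (j := true) (a := a) (h := h⁻¹)
    (fun z hz => ha1 (hc.eq_one_of_conj_mem_range true z⁻¹ a ha (by rwa [inv_inv])))
    ⟨b, by rw [inv_inv]; exact hab⟩).2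
  obtain rfl : factor c true v⁻¹ = h := by rw [map_inv]; exact inv_eq_iff_eq_inv.2 hv
  rw [← map_mul, ← map_inv, ← map_mul] at hab
  exact ha1 (M.malnormal v⁻¹ (fun hv => hh ⟨_, hv, rfl⟩) a ha
    (hc.factor_injective true hab ▸ hb))

end IsGeneric

end Amalgam

/-! ### Rigidity of the amalgam -/

section Rigidity

variable {A : Type u} [Group A] {M : Marking A} {c : ℕ → Bool → A} {s i : Bool} {v : Fin 3 → A}

lemma lift_conj {J : Type*} (v : J → A) (z : A) (w : FreeGroup J) :
    FreeGroup.lift (fun n => z⁻¹ * v n * z) w = z⁻¹ * FreeGroup.lift v w * z := by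
  have hconj : FreeGroup.lift (fun n => z⁻¹ * v n * z) =
      (MulAut.conj z⁻¹).toMonoidHom.comp (FreeGroup.lift v) := by
    ext n
    simp
  rw [hconj]
  simp

lemma tailLetter_succ (x y : A) (i : ℕ) :
    tailLetter x y (i + 1) = x * tailLetter x y i * x⁻¹ := by
  simp [tailLetter, pow_succ', mul_assoc]

lemma conj_tailLetter (x y z : A) (i : ℕ) :
    z⁻¹ * tailLetter x y i * z = tailLetter (z⁻¹ * x * z) (z⁻¹ * y * z) i := by
  simpa using map_tailLetter (MulAut.conj z⁻¹).toMonoidHom x y i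

lemma Marking.eq_one_of_commute_tail (M : Marking A) {z : A} {N : ℕ}
    (h : ∀ n, N ≤ n → Commute z (M.tail n)) : z = 1 :=
  M.eq_one_of_commute N z (h N le_rfl) (h (N + 1) N.le_succ)

lemma Marking.eq_of_tailLetter_eq (M : Marking A) {p q : A} {N : ℕ}
    (h : ∀ n, N ≤ n → tailLetter p q n = M.tail n) : p = M.x ∧ q = M.y := by
  have hp : M.x⁻¹ * p = 1 := M.eq_one_of_commute_tail fun n hn => by
    have conj_eq : p * M.tail n * p⁻¹ = M.x * M.tail n * M.x⁻¹ := by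
      rw [← h n hn, ← tailLetter_succ, h (n + 1) (hn.trans n.le_succ), h n hn, ← tailLetter_succ]
    rw [commute_iff_eq, mul_assoc, mul_inv_eq_iff_eq_mul.1 conj_eq]
    group
  obtain rfl := inv_mul_eq_one.1 hp
  exact ⟨rfl, by simpa [tailLetter] using h N le_rfl⟩

variable (M c) in
/-- The substitution of `v` for the marks sends every word representing the left member of a pair
into the amalgamated subgroup of the copy `i`. -/
def CarriesPairs (s i : Bool) (v : Fin 3 → A) : Prop :=
  ∀ w w', Paired (Set.range c) s (FreeGroup.lift M.marks w) (FreeGroup.lift M.marks w') →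
    FreeGroup.lift v w ∈ (basisHom c i).range

lemma CarriesPairs.conj (hv : CarriesPairs M c s i v) {d : A} (hd : d ∈ (basisHom c i).range) :
    CarriesPairs M c s i fun n => d⁻¹ * v n * d := fun w w' h => by
  rw [lift_conj]
  exact mul_mem (mul_mem (inv_mem hd) (hv w w' h)) hd

namespace IsGeneric

lemma notMem_range_of_pow_three (hc : IsGeneric M c) {a : A} (ha : a ^ 3 = 1) (ha1 : a ≠ 1) :
    a ∉ (basisHom c s).range :=
  fun h => ha1 (hc.eq_one_of_pow_eq_one h three_ne_zero ha)

lemma side_eq_of_carriesPairs (hc : IsGeneric M c) (hv : CarriesPairs M c s i v)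
    (h3 : v 2 ^ 3 = 1) (h1 : v 2 ≠ 1) : i = s := by
  by_contra his
  obtain rfl := Bool.eq_not_of_ne his
  rcases hc.met (.otherSide s v) with h | ⟨w, w', h, hw⟩
  exacts [hc.notMem_range_of_pow_three h3 h1 h, hw (hv w w' h)]

lemma exists_tailLetter_eq_conj (hc : IsGeneric M c) (hv : CarriesPairs M c s s v)
    (h3 : v 2 ^ 3 = 1) (h1 : v 2 ≠ 1) :
    ∃ d ∈ (basisHom c s).range, ∃ N, ∀ n, N ≤ n →
      tailLetter (v 0) (v 1) n = d * M.tail n * d⁻¹ := by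
  rcases hc.met (.sameSide s v) with h | ⟨w, w', h, hw⟩ | h
  exacts [absurd h (hc.notMem_range_of_pow_three h3 h1), absurd (hv w w' h) hw, h]

/-- `v 2` commutes with `M.k`, so `v 2 * M.k⁻¹` is a torsion element of the free amalgamated
subgroup as soon as it lies there. -/
lemma apply_two_eq_of_carriesPairs (hc : IsGeneric M c) (hv : CarriesPairs M c s s v)
    (h0 : v 0 = M.x) (h1 : v 1 = M.y) (h3 : v 2 ^ 3 = 1) (hx : FixesUpToInv (v 0) (v 2))
    (hy : FixesUpToInv (v 1) (v 2)) : v 2 = M.k := by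
  obtain ⟨m, n, hmn : Paired (Set.range c) s (M.k * M.tail m) (M.tail n)⟩ :=
    hc.met (.twist s)
  have mem : v 2 * M.tail m ∈ (basisHom c s).range := by
    simpa [h0, h1] using
      hv (Marking.testWord true m) (Marking.testWord false n) (by simpa using hmn)
  have mem' : v 2 * M.k⁻¹ ∈ (basisHom c s).range := by
    simpa [mul_assoc] using mul_mem mem (inv_mem (mem_range_basisHom_of_paired hmn))
  have hcomm : Commute (v 2) M.k⁻¹ := (M.commute_k _ h3 (h0 ▸ hx) (h1 ▸ hy)).inv_right
  refine mul_inv_eq_one.1 (hc.eq_one_of_pow_eq_one mem' three_ne_zero ?_)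
  rw [hcomm.mul_pow, h3, inv_pow, M.k_pow_three, inv_one, mul_one]

lemma exists_conj_eq_marks (hc : IsGeneric M c) (hv : CarriesPairs M c s s v) (h3 : v 2 ^ 3 = 1)
    (h1 : v 2 ≠ 1) (hx : FixesUpToInv (v 0) (v 2)) (hy : FixesUpToInv (v 1) (v 2)) :
    ∃ d, (fun n => d⁻¹ * v n * d) = M.marks := by
  obtain ⟨d, hd, N, hN⟩ := hc.exists_tailLetter_eq_conj hv h3 h1
  obtain ⟨γ, hγ⟩ : ∃ γ : A →* A, ∀ a, γ a = d⁻¹ * a * d :=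
    ⟨(MulAut.conj d⁻¹).toMonoidHom, by simp⟩
  obtain ⟨h0, h1⟩ : d⁻¹ * v 0 * d = M.x ∧ d⁻¹ * v 1 * d = M.y :=
    M.eq_of_tailLetter_eq (N := N) fun n hn => by
      rw [← conj_tailLetter, hN n hn]
      group
  have h2 : d⁻¹ * v 2 * d = M.k := by
    refine hc.apply_two_eq_of_carriesPairs (hv.conj hd) h0 h1 ?_ ?_ ?_
    · rw [← hγ, ← map_pow, h3, map_one]
    · simpa only [hγ] using hx.map γ
    · simpa only [hγ] using hy.map γ
  exact ⟨d, funext (Fin.forall_fin_succ.2 ⟨h0, Fin.forall_fin_two.2 ⟨h1, h2⟩⟩)⟩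

lemma eq_one_of_factor_commute_pairs (hc : IsGeneric M c) {z : A}
    (hz : ∀ w w', Paired (Set.range c) s (FreeGroup.lift M.marks w) (FreeGroup.lift M.marks w') →
      Commute (factor c s z) (factor c s (FreeGroup.lift M.marks w))) : z = 1 := by
  obtain ⟨m, n, paired, paired_succ⟩ := hc.met (.consecutive s)
  have commute_tail {m n : ℕ} (h : Paired (Set.range c) s (M.tail m) (M.tail n)) :
      Commute z (M.tail m) := by
    simpa using (hz (Marking.testWord false m) (Marking.testWord false n)
      (by simpa using h)).of_map (hc.factor_injective s)
  exact M.eq_one_of_commute m z (commute_tail paired) (commute_tail paired_succ)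

/-- If `f` lies in neither factor, conjugation by the first letter `z` of a reduced word for `f`
carries pairs, hence agrees on the tail with conjugation by an element of the amalgamated
subgroup; so `z` lies in this subgroup. -/
lemma eq_one_of_commute_pairs (hc : IsGeneric M c) {f : Amalgam c}
    (hf : ∀ s w w', Paired (Set.range c) s (FreeGroup.lift M.marks w) (FreeGroup.lift M.marks w') →
      Commute f (factor c s (FreeGroup.lift M.marks w))) : f = 1 := by
  by_cases hfac : ∃ s, f ∈ (factor c s).range
  · obtain ⟨s, z, rfl⟩ := hfac
    rw [hc.eq_one_of_factor_commute_pairs (hf s), map_one]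
  push Not at hfac
  obtain ⟨s, z, hz, hcarry⟩ := exists_notMem_range_forall_conj_mem_range hc.injective hfac
  have carries : CarriesPairs M c s s fun n => z⁻¹ * M.marks n * z := fun w w' h => by
    rw [lift_conj]
    refine hcarry s _ ⟨FreeGroup.lift M.marks w, ?_⟩
    have hcomm := (hf s w w' h).inv_left
    rw [← factor, hcomm.eq, inv_mul_cancel_right]
  obtain ⟨d, hd, N, hN⟩ := hc.exists_tailLetter_eq_conj carries
    (by simpa [M.k_pow_three] using conj_pow (a := z⁻¹) (b := M.k) (i := 3))
    (by simpa using (conj_eq_one_iff (a := z⁻¹)).not.2 M.k_ne_one)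
  have hzd : z * d = 1 := M.eq_one_of_commute_tail fun n hn => by
    have conj_eq : z⁻¹ * M.tail n * z = d * M.tail n * d⁻¹ := by
      rw [← hN n hn]
      exact conj_tailLetter M.x M.y z n
    rw [commute_iff_eq, ← mul_inv_eq_iff_eq_mul, mul_inv_rev]
    calc z * d * M.tail n * (d⁻¹ * z⁻¹)
      _ = z * (d * M.tail n * d⁻¹) * z⁻¹ := by group
      _ = M.tail n := by rw [← conj_eq]; group
  exact absurd (eq_inv_of_mul_eq_one_left hzd ▸ inv_mem hd) hz

end IsGeneric

variable (M) in
/-- Up to conjugation by `h`, the endomorphism `β` maps the marks of the copy `s` to the elements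
`v` of the copy `i`. -/
def Represents (c : ℕ → Bool → A) (β : Amalgam c →* Amalgam c) (s : Bool) (h : Amalgam c) (i : Bool)
    (v : Fin 3 → A) : Prop :=
  ∀ w, β (factor c s (FreeGroup.lift M.marks w)) = h * factor c i (FreeGroup.lift v w) * h⁻¹

namespace Represents

variable {β : Amalgam c →* Amalgam c} {h h' : Amalgam c} {i' : Bool} {v' : Fin 3 → A}

lemma conj (hr : Represents M c β s h i v) (z : A) :
    Represents M c β s (h * factor c i z) i fun n => z⁻¹ * v n * z := fun w => by
  rw [hr, lift_conj]
  simp [mul_assoc]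

lemma lift_eq_lift_iff (hc : IsGeneric M c) (hβ : Injective β) (hr : Represents M c β s h i v)
    (w w' : FreeGroup (Fin 3)) : FreeGroup.lift v w = FreeGroup.lift v w' ↔
      FreeGroup.lift M.marks w = FreeGroup.lift M.marks w' := by
  rw [← (hc.factor_injective s).eq_iff (a := FreeGroup.lift M.marks w), ← hβ.eq_iff, hr, hr,
    mul_left_inj, mul_right_inj, (hc.factor_injective i).eq_iff]

lemma pow_three (hc : IsGeneric M c) (hβ : Injective β) (hr : Represents M c β s h i v) :
    v 2 ^ 3 = 1 := by
  have lift_eq := (hr.lift_eq_lift_iff hc hβ (FreeGroup.of 2 ^ 3) 1).2 (by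
    rw [map_pow, FreeGroup.lift_apply_of, M.marks_two, M.k_pow_three, map_one])
  rwa [map_pow, FreeGroup.lift_apply_of, map_one] at lift_eq

lemma ne_one (hc : IsGeneric M c) (hβ : Injective β) (hr : Represents M c β s h i v) :
    v 2 ≠ 1 := by
  simpa [M.k_ne_one] using hr.lift_eq_lift_iff hc hβ (.of 2) 1

lemma fixesUpToInv (hc : IsGeneric M c) (hβ : Injective β) (hr : Represents M c β s h i v)
    {n : Fin 3} (hn : FixesUpToInv (M.marks n) M.k) : FixesUpToInv (v n) (v 2) := by
  refine hn.imp (fun h => ?_) fun h => ?_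
  · simpa [h] using hr.lift_eq_lift_iff hc hβ (.of n * .of 2 * (.of n)⁻¹) (.of 2)
  · simpa [h] using hr.lift_eq_lift_iff hc hβ (.of n * .of 2 * (.of n)⁻¹) (.of 2)⁻¹

lemma exists_represents_marks_of_carriesPairs (hc : IsGeneric M c) (hβ : Injective β)
    (hr : Represents M c β s h i v) (hv : CarriesPairs M c s i v) :
    ∃ f, Represents M c β s f s M.marks := by
  obtain rfl := hc.side_eq_of_carriesPairs hv (hr.pow_three hc hβ) (hr.ne_one hc hβ)
  obtain ⟨d, hd⟩ := hc.exists_conj_eq_marks hv (hr.pow_three hc hβ) (hr.ne_one hc hβ)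
    (hr.fixesUpToInv hc hβ M.fixes_x) (hr.fixesUpToInv hc hβ M.fixes_y)
  exact ⟨_, hd ▸ hr.conj d⟩

lemma conj_factor_eq (hr : Represents M c β s h i v) (hr' : Represents M c β (!s) h' i' v')
    {w w' : FreeGroup (Fin 3)}
    (hw : Paired (Set.range c) s (FreeGroup.lift M.marks w) (FreeGroup.lift M.marks w')) :
    (h⁻¹ * h')⁻¹ * factor c i (FreeGroup.lift v w) * (h⁻¹ * h') =
      factor c i' (FreeGroup.lift v' w') := by
  have image_eq := congrArg β (factor_eq_factor_not hw)
  rw [hr, hr'] at image_eq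
  calc _ = h'⁻¹ * (h * factor c i (FreeGroup.lift v w) * h⁻¹) * h' := by group
    _ = factor c i' (FreeGroup.lift v' w') := by rw [image_eq]; group

lemma exists_carriesPairs_conj (hc : IsGeneric M c) (hr : Represents M c β s h i v)
    (hr' : Represents M c β (!s) h' i' v') (hne : ¬(i = i' ∧ h⁻¹ * h' ∈ (factor c i).range)) :
    ∃ z, CarriesPairs M c s i fun n => z⁻¹ * v n * z := by
  obtain ⟨z, hz⟩ := exists_forall_conj_mem_range hc.injective hne
  refine ⟨z, fun w w' hw => ?_⟩
  rw [lift_conj]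
  exact hz _ ⟨_, (hr.conj_factor_eq hr' hw).symm⟩

lemma not_eq_and_mem_range (hc : IsGeneric M c) (hβ : Injective β)
    (hr : Represents M c β true h i v) (hr' : Represents M c β false h' i' v') :
    ¬(i = i' ∧ h⁻¹ * h' ∈ (factor c i).range) := by
  rintro ⟨rfl, z, hz⟩
  have tail_ne (n : ℕ) : tailLetter (v 0) (v 1) n ≠ tailLetter (v 0) (v 1) (n + 1) := by
    have marks_ne := M.tail_injective.ne n.succ_ne_self.symm
    simpa using (hr.lift_eq_lift_iff hc hβ (Marking.testWord false n)
      (Marking.testWord false (n + 1))).not.2 (by simpa using marks_ne)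
  obtain ⟨w, w', hw, hne⟩ := hc.met (.distinguish v fun n => z⁻¹⁻¹ * v' n * z⁻¹) tail_ne
  refine hne (hc.factor_injective i ?_)
  have conj_eq := hr.conj_factor_eq hr' hw
  rw [lift_conj, inv_inv, map_mul, map_mul, ← conj_eq, map_inv, hz]
  group

end Represents

namespace IsGeneric

variable {β : Amalgam c →* Amalgam c}

lemma mem_range_factor_of_fixesUpToInv (hc : IsGeneric M c) {a : A} (h3 : a ^ 3 = 1) (h1 : a ≠ 1)
    {u : Amalgam c} (hu : FixesUpToInv u (factor c i a)) : u ∈ (factor c i).range := by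
  refine inv_mem_iff.1 (conj_of_mem_range_of hc.injective (a := a) (fun z => ?_) (j := i) ?_).2
  · exact hc.notMem_range_of_pow_three
      (by simpa [h3] using conj_pow (a := z⁻¹) (b := a) (i := 3))
      (by simpa using (conj_eq_one_iff (a := z⁻¹)).not.2 h1)
  · rw [inv_inv]
    exact hu.elim (fun hu => ⟨a, hu.symm⟩) fun hu => ⟨a⁻¹, (map_inv _ a).trans hu.symm⟩

lemma exists_represents (hc : IsGeneric M c) (hβ : Injective β) (s : Bool) :
    ∃ h i v, Represents M c β s h i v := by
  obtain ⟨i, a, ha⟩ := exists_isConj_of_of_pow_eq_one hc.injective three_ne_zero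
    (h := β (factor c s M.k)) (by rw [← map_pow, ← map_pow, M.k_pow_three, map_one, map_one])
  obtain ⟨h, hh⟩ := isConj_iff.1 ha
  let γ : A →* Amalgam c := (MulAut.conj h⁻¹).toMonoidHom.comp (β.comp (factor c s))
  have γ_injective : Injective γ :=
    (MulAut.conj h⁻¹).injective.comp (hβ.comp (hc.factor_injective s))
  have γ_k : γ M.k = factor c i a := by
    simp only [γ, MonoidHom.comp_apply, MulEquiv.toMonoidHom_eq_coe, MonoidHom.coe_coe,
      MulAut.conj_apply, ← hh]
    simp [factor, mul_assoc]
  have mem_range {u : A} (hu : FixesUpToInv u M.k) : γ u ∈ (factor c i).range := by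
    refine hc.mem_range_factor_of_fixesUpToInv (a := a) ?_ ?_ (γ_k ▸ hu.map γ)
    · rw [← map_eq_one_iff _ (hc.factor_injective i), map_pow, ← γ_k, ← map_pow, M.k_pow_three,
        map_one]
    · rw [← (map_ne_one_iff _ (hc.factor_injective i)), ← γ_k, map_ne_one_iff _ γ_injective]
      exact M.k_ne_one
  obtain ⟨p, hp⟩ := mem_range M.fixes_x
  obtain ⟨q, hq⟩ := mem_range M.fixes_y
  refine ⟨h, i, ![p, q, a], fun w => ?_⟩
  have hγ : γ.comp (FreeGroup.lift M.marks) = (factor c i).comp (FreeGroup.lift ![p, q, a]) := by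
    ext n
    fin_cases n <;> simp [hp, hq, γ_k]
  have hγw := DFunLike.congr_fun hγ w
  simp only [γ, MonoidHom.comp_apply, MulEquiv.toMonoidHom_eq_coe, MonoidHom.coe_coe,
    MulAut.conj_apply] at hγw
  rw [← hγw]
  group

theorem exists_represents_marks (hc : IsGeneric M c) (hβ : Injective β) (s : Bool) :
    ∃ f, Represents M c β s f s M.marks := by
  obtain ⟨h, i, v, hr⟩ := hc.exists_represents hβ true
  obtain ⟨h', i', v', hr'⟩ := hc.exists_represents hβ false
  have hne := hr.not_eq_and_mem_range hc hβ hr'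
  cases s
  · obtain ⟨z, hz⟩ := hr'.exists_carriesPairs_conj hc hr fun ⟨hi, hmem⟩ =>
      hne ⟨hi.symm, by simpa [hi] using inv_mem hmem⟩
    exact (hr'.conj z).exists_represents_marks_of_carriesPairs hc hβ hz
  · obtain ⟨z, hz⟩ := hr.exists_carriesPairs_conj hc hr' hne
    exact (hr.conj z).exists_represents_marks_of_carriesPairs hc hβ hz

lemma eq_of_represents_marks (hc : IsGeneric M c) {f f' : Amalgam c}
    (hf : Represents M c β true f true M.marks) (hf' : Represents M c β false f' false M.marks) :
    f = f' := by
  have commute_true {w w'} (hw : Paired (Set.range c) true (FreeGroup.lift M.marks w)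
      (FreeGroup.lift M.marks w')) :
      Commute (f⁻¹ * f') (factor c true (FreeGroup.lift M.marks w)) := by
    have conj_eq := hf.conj_factor_eq hf' hw
    rw [← Bool.not_true, ← factor_eq_factor_not hw, mul_assoc, inv_mul_eq_iff_eq_mul] at conj_eq
    exact conj_eq.symm
  refine inv_mul_eq_one.1 (hc.eq_one_of_commute_pairs ?_)
  rintro (_ | _) w w' hw
  · rw [factor_eq_factor_not hw]
    exact commute_true hw.symm
  · exact commute_true hw

theorem exists_eq_conj (hc : IsGeneric M c) (hβ : Injective β) : ∃ f, ∀ z, β z = f * z * f⁻¹ := by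
  obtain ⟨f, hf⟩ := hc.exists_represents_marks hβ true
  obtain ⟨f', hf'⟩ := hc.exists_represents_marks hβ false
  obtain rfl := hc.eq_of_represents_marks hf hf'
  refine ⟨f, fun z => DFunLike.congr_fun (g := (MulAut.conj f).toMonoidHom)
    (MonoidHom.eq_of_eqOn_dense hc.closure_factor_eq_top ?_) z⟩
  rintro _ (rfl | rfl | rfl | rfl)
  · simpa using hf (.of 0)
  · simpa using hf (.of 1)
  · simpa using hf' (.of 0)
  · simpa using hf' (.of 1)

end IsGeneric

end Rigidity

end GenericAmalgam

/-- Every countable group `G` embeds into a finitely generated group `H` such that `H`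
is simple, complete (trivial centre and all automorphisms inner) and co-Hopfian
(injective endomorphisms are surjective), and the image of `G` is malnormal in `H`. -/
theorem embedding_theorem_countable (G : Type u) [Group G] [Countable G] :
    ∃ (H : Type u) (_ : Group H) (ι : G →* H), Function.Injective ι ∧
      (∃ S : Finset H, Subgroup.closure (S : Set H) = ⊤) ∧
      IsSimpleGroup H ∧
      Subgroup.center H = ⊥ ∧
      (∀ φ : H ≃* H, ∃ h : H, ∀ x : H, φ x = h * x * h⁻¹) ∧
      (∀ β : H →* H, Function.Injective β → Function.Surjective β) ∧
      (∀ h : H, h ∉ ι.range → ∀ g ∈ ι.range, h * g * h⁻¹ ∈ ι.range → g = 1) := by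
  classical
  obtain ⟨c, hc⟩ := GenericAmalgam.exists_isGeneric (GenericAmalgam.BlockProduct.marking G)
  let ι := (GenericAmalgam.factor c true).comp (GenericAmalgam.BlockProduct.inl G)
  have range_ι : ι.range = (GenericAmalgam.BlockProduct.inl G).range.map
      (GenericAmalgam.factor c true) := MonoidHom.range_comp _ _
  refine ⟨GenericAmalgam.Amalgam c, inferInstance, ι,
    (hc.factor_injective true).comp (GenericAmalgam.BlockProduct.inl_injective G),
    ⟨{_, _, _, _}, by simpa using hc.closure_factor_eq_top⟩, hc.isSimpleGroup, hc.center_eq_bot,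
    fun φ => hc.exists_eq_conj (β := φ.toMonoidHom) φ.injective, fun β hβ => ?_, ?_⟩
  · obtain ⟨f, hf⟩ := hc.exists_eq_conj hβ
    exact fun z => ⟨f⁻¹ * z * f, by rw [hf]; group⟩
  · rw [range_ι]
    exact fun h hh g hg hgh => hc.malnormal hh hg hgh
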